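/- Let C ∈ RH∞^{n×n} be real-rational and γ > 0. Then [P,C] is stable for every P in N₀ satisfying P(∞) ≥ 0 and P(0) < γI if and only if C is strictly negative imaginary (SNI) and C(0) ≤ (1/γ)I. -/

import Mathlib

open Matrix Polynomial Filter Topology
open scoped ComplexOrder

noncomputable section

namespace NIControl

/-- Evaluate a real-rational function at a complex point (junk value at poles). -/
def evalC (f : RatFunc ℝ) (s : ℂ) : ℂ :=
  f.eval (algebraMap ℝ ℂ) s

/-- `s` is a pole of the real-rational function `f`
(the reduced denominator vanishes at `s`). -/
def IsPoleAt (f : RatFunc ℝ) (s : ℂ) : Prop :=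
  f.denom.eval₂ (algebraMap ℝ ℂ) s = 0

variable {n : ℕ}

/-- Pointwise evaluation of a real-rational transfer matrix at a complex point. -/
def evalM (G : Matrix (Fin n) (Fin n) (RatFunc ℝ)) (s : ℂ) : Matrix (Fin n) (Fin n) ℂ :=
  Matrix.of fun i j => evalC (G i j) s

/-- Pointwise evaluation of a real-rational transfer matrix at a real point. -/
def evalR (G : Matrix (Fin n) (Fin n) (RatFunc ℝ)) (x : ℝ) : Matrix (Fin n) (Fin n) ℝ :=
  Matrix.of fun i j => (G i j).eval (RingHom.id ℝ) x

/-- Value at `s = ∞` of a proper real-rational function. -/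
def atInfinity (f : RatFunc ℝ) : ℝ :=
  if f.num.degree = f.denom.degree then f.num.leadingCoeff / f.denom.leadingCoeff else 0

/-- The instantaneous gain `G(∞)` of a proper real-rational transfer matrix. -/
def evalInf (G : Matrix (Fin n) (Fin n) (RatFunc ℝ)) : Matrix (Fin n) (Fin n) ℝ :=
  Matrix.of fun i j => atInfinity (G i j)

/-- The matrix `G` has a pole at `s`. -/
def HasPole (G : Matrix (Fin n) (Fin n) (RatFunc ℝ)) (s : ℂ) : Prop :=
  ∃ i j, IsPoleAt (G i j) s

/-- All entries of `G` are proper rational functions. -/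
def Proper (G : Matrix (Fin n) (Fin n) (RatFunc ℝ)) : Prop :=
  ∀ i j, (G i j).num.degree ≤ (G i j).denom.degree

/-- All entries of `G` are strictly proper rational functions. -/
def StrictlyProper (G : Matrix (Fin n) (Fin n) (RatFunc ℝ)) : Prop :=
  ∀ i j, (G i j).num.degree < (G i j).denom.degree

/-- The pole of `G` at the origin (if any) is at most simple. -/
def NoDoubleOriginPole (G : Matrix (Fin n) (Fin n) (RatFunc ℝ)) : Prop :=
  ∀ i j, (G i j).denom.rootMultiplicity 0 ≤ 1

/-- Membership in `RH∞`: proper and no poles in the closed right-half complex plane. -/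
def MemRHinf {m : Type*} [Fintype m] (G : Matrix m m (RatFunc ℝ)) : Prop :=
  (∀ i j, (G i j).num.degree ≤ (G i j).denom.degree) ∧
  ∀ s : ℂ, 0 ≤ s.re → ∀ i j, ¬ IsPoleAt (G i j) s

/-- The point `jω` on the imaginary axis. -/
def jw (ω : ℝ) : ℂ := Complex.I * (ω : ℂ)

/-- The negative-imaginary frequency kernel `j (M − M*)`. -/
def niKer (M : Matrix (Fin n) (Fin n) ℂ) : Matrix (Fin n) (Fin n) ℂ :=
  Complex.I • (M - Mᴴ)

/-- Negative imaginary (NI) real-rational transfer matrix. -/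
def IsNI (G : Matrix (Fin n) (Fin n) (RatFunc ℝ)) : Prop :=
  Proper G ∧
  (∀ s : ℂ, 0 < s.re → ¬ HasPole G s) ∧
  (∀ ω : ℝ, 0 < ω → ¬ HasPole G (jw ω) → (niKer (evalM G (jw ω))).PosSemidef) ∧
  (∀ ω : ℝ, 0 < ω → HasPole G (jw ω) →
    ∃ R : Matrix (Fin n) (Fin n) ℂ, R.PosSemidef ∧
      Tendsto (fun s : ℂ => (s - jw ω) • Complex.I • evalM G s) (𝓝[≠] jw ω) (𝓝 R)) ∧
  (HasPole G 0 →
    (∀ k : ℕ, 3 ≤ k → Tendsto (fun s : ℂ => s ^ k • evalM G s) (𝓝[≠] 0) (𝓝 0)) ∧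
    ∃ R : Matrix (Fin n) (Fin n) ℂ, R.PosSemidef ∧
      Tendsto (fun s : ℂ => s ^ 2 • evalM G s) (𝓝[≠] 0) (𝓝 R))

/-- Strictly negative imaginary (SNI) real-rational transfer matrix. -/
def IsSNI (G : Matrix (Fin n) (Fin n) (RatFunc ℝ)) : Prop :=
  MemRHinf G ∧ ∀ ω : ℝ, 0 < ω → (niKer (evalM G (jw ω))).PosDef

/-- Positive real (passive) real-rational transfer matrix. -/
def IsPositiveReal (G : Matrix (Fin n) (Fin n) (RatFunc ℝ)) : Prop :=
  MemRHinf G ∧ ∀ ω : ℝ, 0 ≤ ω → (evalM G (jw ω) + (evalM G (jw ω))ᴴ).PosSemidef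

/-- Output strictly passive real-rational transfer matrix. -/
def IsOSP (G : Matrix (Fin n) (Fin n) (RatFunc ℝ)) : Prop :=
  MemRHinf G ∧ ∃ ε : ℝ, 0 < ε ∧ ∀ ω : ℝ, 0 ≤ ω →
    (evalM G (jw ω) + (evalM G (jw ω))ᴴ -
      (ε : ℂ) • ((evalM G (jw ω))ᴴ * evalM G (jw ω))).PosSemidef

/-- Stability of the positive feedback interconnection `[P, C]`:
`[I; C] (I − P C)⁻¹ [I, P] ∈ RH∞`. -/
def FeedbackStable (P C : Matrix (Fin n) (Fin n) (RatFunc ℝ)) : Prop :=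
  ((1 : Matrix (Fin n) (Fin n) (RatFunc ℝ)) - P * C).det ≠ 0 ∧
  MemRHinf (Matrix.fromBlocks
    (1 - P * C)⁻¹ ((1 - P * C)⁻¹ * P)
    (C * (1 - P * C)⁻¹) (C * (1 - P * C)⁻¹ * P))

/-- All eigenvalues of the complex matrix `M` are real and less than `c`. -/
def eigsRealAndLT (M : Matrix (Fin n) (Fin n) ℂ) (c : ℝ) : Prop :=
  ∀ μ ∈ spectrum ℂ M, μ.im = 0 ∧ μ.re < c

/-- The (real) eigenvalues of the real matrix `M` are all real and its largest
eigenvalue is less than `c`. -/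
def maxEigLT (M : Matrix (Fin n) (Fin n) ℝ) (c : ℝ) : Prop :=
  eigsRealAndLT (M.map (Complex.ofReal)) c

/-- Loewner order `A ≤ B` on real matrices. -/
def LoewnerLE (A B : Matrix (Fin n) (Fin n) ℝ) : Prop := (B - A).PosSemidef

/-- Strict Loewner order `A < B` on real matrices. -/
def LoewnerLT (A B : Matrix (Fin n) (Fin n) ℝ) : Prop := (B - A).PosDef

/-!
Continuing the quadratic form of `j(G - G*)` from the imaginary axis to the plane gives, for
`ξ = s v + w`, the function `(w* G(0) w - ξ* G(s) ξ) / s` (with `s̄` replaced by `-s` in `ξ*`). For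
negative imaginary `G` it is positive real, by a minimum principle on the right half-plane that
tolerates simple poles on the boundary. With suitable `v` and `w` this yields
`Re (s u* P(s) u) ≥ (Re s / γ) |P(s) u|²` and `Re (s̄ z* C(s) z) < Re s · z* C(0) z` for `Re s > 0`,
which together exclude `z = P(s) C(s) z`. On the axis, strictness of `C` and homogeneity bound the
loop uniformly, even next to the poles of `P`.

Conversely, if `Im (z* C(jω) z) ≥ 0` for some `z` with `C(jω) z ≠ 0`, then a damped scalar resonance
in parallel with an undamped mode near `ω` interpolates `P(jω) C(jω) z = z` within the uncertainty
class. The case `C(jω) z = 0` is excluded by a plant with an invertible residue at `jω`, and an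
eigenvalue `μ > 1/γ` of `C(0)` by the constant plant `μ⁻¹ I`.
-/

section MinimumPrinciple

variable {f : ℂ → ℂ} {a s : ℂ} {U : Set ℂ}

lemma re_eqOn_of_isMinOn (hU : IsPreconnected U) (hUo : IsOpen U) (hf : DifferentiableOn ℂ f U)
    (ha : a ∈ U) (hmin : IsMinOn (fun s => (f s).re) U a) : ∀ s ∈ U, (f s).re = (f a).re := by
  have hmax : IsMaxOn (norm ∘ fun s => Complex.exp (-f s)) U a := fun s hs => by
    simpa [Complex.norm_exp] using hmin hs
  intro s hs
  have hexp := Complex.eqOn_of_isPreconnected_of_isMaxOn_norm hU hUo hf.neg.cexp ha hmax hs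
  simpa [Complex.norm_exp] using congrArg norm hexp

lemma isOpen_re_pos : IsOpen {s : ℂ | 0 < s.re} := isOpen_lt continuous_const Complex.continuous_re

lemma isPreconnected_re_pos : IsPreconnected {s : ℂ | 0 < s.re} :=
  (convex_halfSpace_re_gt 0).isPreconnected

lemma isCompact_setOf_re_le_neg (hf : DifferentiableOn ℂ f {s | 0 < s.re})
    (haxis : ∀ a : ℂ, a.re = 0 → ∀ ε > 0, ∀ᶠ s in 𝓝 a, 0 < s.re → -ε < (f s).re)
    (hinf : ∀ ε > 0, ∀ᶠ s in Bornology.cobounded ℂ, 0 < s.re → -ε < (f s).re)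
    {ε : ℝ} (hε : 0 < ε) : IsCompact {s : ℂ | 0 < s.re ∧ (f s).re ≤ -ε} := by
  refine Metric.isCompact_of_isClosed_isBounded (isOpen_compl_iff.mp ?_)
    (Bornology.isBounded_def.mpr ?_)
  · refine isOpen_iff_mem_nhds.mpr fun a ha => ?_
    have hcompl (h : ∀ᶠ s in 𝓝 a, 0 < s.re → -ε < (f s).re) :
        {s : ℂ | 0 < s.re ∧ (f s).re ≤ -ε}ᶜ ∈ 𝓝 a := by
      filter_upwards [h] with s hs using fun hs' => (hs hs'.1).not_ge hs'.2
    rcases lt_trichotomy a.re 0 with hlt | hzero | hgt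
    · refine hcompl ?_
      filter_upwards [Complex.continuous_re.continuousAt.eventually_lt_const hlt] with s hs hs'
      exact absurd hs' hs.le.not_gt
    · exact hcompl (haxis a hzero ε hε)
    · have hcont : ContinuousAt (fun s => (f s).re) a :=
        Complex.continuous_re.continuousAt.comp
          (hf.differentiableAt (isOpen_re_pos.mem_nhds hgt)).continuousAt
      have hfa : -ε < (f a).re := by
        contrapose! ha
        exact fun h => h ⟨hgt, ha⟩
      refine hcompl ?_
      filter_upwards [hcont.eventually_const_lt hfa] with s hs _ using hs
  · filter_upwards [hinf ε hε] with s hs using fun hs' => (hs hs'.1).not_ge hs'.2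

theorem re_nonneg_of_boundary (hf : DifferentiableOn ℂ f {s | 0 < s.re})
    (haxis : ∀ a : ℂ, a.re = 0 → ∀ ε > 0, ∀ᶠ s in 𝓝 a, 0 < s.re → -ε < (f s).re)
    (hinf : ∀ ε > 0, ∀ᶠ s in Bornology.cobounded ℂ, 0 < s.re → -ε < (f s).re)
    (hs : 0 < s.re) : 0 ≤ (f s).re := by
  by_contra! hneg
  have hε : 0 < -(f s).re := by linarith
  have hcont : ContinuousOn (fun s => (f s).re) {s | 0 < s.re} :=
    Complex.continuous_re.comp_continuousOn hf.continuousOn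
  obtain ⟨c, ⟨hc, hcε⟩, hcmin⟩ := (isCompact_setOf_re_le_neg hf haxis hinf hε).exists_isMinOn
    ⟨s, hs, by simp⟩ (hcont.mono fun z hz => hz.1)
  have hmin : IsMinOn (fun s => (f s).re) {s | 0 < s.re} c := fun z hz => by
    by_cases hzε : (f z).re ≤ -(-(f s).re)
    · exact hcmin ⟨hz, hzε⟩
    · exact hcε.trans (not_le.mp hzε).le
  have hconst := re_eqOn_of_isMinOn isPreconnected_re_pos isOpen_re_pos hf hc hmin
  have hfreq : ∃ᶠ z in 𝓝 (0 : ℂ), 0 < z.re :=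
    mem_closure_iff_frequently (s := {z : ℂ | 0 < z.re}).mp
      (by rw [Complex.closure_setOfPred_lt_re]; exact le_refl (0 : ℝ))
  obtain ⟨z, hz, hzε⟩ := (hfreq.and_eventually (haxis 0 rfl _ hε)).exists
  exact (hzε hz).not_ge ((hconst z hz).trans_le hcε)

/-- `f` is locally positive real at the boundary point `a`: it is holomorphic around `a` except for
an at most simple pole with nonnegative residue, and its real part is nonnegative on the imaginary
axis. -/
structure PosRealNear (f : ℂ → ℂ) (a : ℂ) : Prop where
  differentiableAt : ∀ᶠ s in 𝓝[≠] a, DifferentiableAt ℂ f s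
  residue : ∃ r : ℝ, 0 ≤ r ∧ Tendsto (fun s => (s - a) * f s) (𝓝[≠] a) (𝓝 r)
  axis : ∀ᶠ s in 𝓝[≠] a, s.re = 0 → 0 ≤ (f s).re

lemma tendsto_add_mul_I_nhdsNE (a : ℂ) :
    Tendsto (fun t : ℝ => a + t * Complex.I) (𝓝[≠] 0) (𝓝[≠] a) := by
  refine tendsto_nhdsWithin_iff.mpr ⟨?_, ?_⟩
  · have : Continuous fun t : ℝ => a + t * Complex.I := by fun_prop
    simpa using (this.tendsto 0).mono_left nhdsWithin_le_nhds
  · filter_upwards [self_mem_nhdsWithin] with t ht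
    simpa using ht

lemma PosRealNear.exists_tendsto_sub_div (hf : PosRealNear f a) (ha : a.re = 0) :
    ∃ r : ℝ, 0 ≤ r ∧ ∃ b : ℂ, 0 ≤ b.re ∧ Tendsto (fun s => f s - r / (s - a)) (𝓝[≠] a) (𝓝 b) := by
  obtain ⟨r, hr, hlim⟩ := hf.residue
  set g : ℂ → ℂ := fun s => f s - r / (s - a) with hg
  have hdiff : ∀ᶠ s in 𝓝[≠] a, DifferentiableAt ℂ g s := by
    filter_upwards [hf.differentiableAt, self_mem_nhdsWithin] with s hs hsa
    have : s - a ≠ 0 := sub_ne_zero.mpr hsa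
    fun_prop (disch := assumption)
  have hlittleO : (fun s => g s - g a) =o[𝓝[≠] a] fun s => (s - a)⁻¹ := by
    refine (Asymptotics.isLittleO_iff_tendsto' ?_).mpr ?_
    · filter_upwards [self_mem_nhdsWithin] with s hsa h
      exact absurd h (inv_ne_zero (sub_ne_zero.mpr hsa))
    · have hsub : Tendsto (fun s => g a * (s - a)) (𝓝[≠] a) (𝓝 0) := by
        have : Continuous fun s => g a * (s - a) := by fun_prop
        simpa using (this.tendsto a).mono_left nhdsWithin_le_nhds
      have hzero := (hlim.sub_const (r : ℂ)).sub hsub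
      rw [sub_self, sub_zero] at hzero
      refine hzero.congr' ?_
      filter_upwards [self_mem_nhdsWithin] with s hsa
      have : s - a ≠ 0 := sub_ne_zero.mpr hsa
      simp only [hg]
      field_simp
  have hb :=
    Complex.tendsto_limUnder_of_differentiable_on_punctured_nhds_of_isLittleO hdiff hlittleO
  refine ⟨r, hr, _, ?_, hb⟩
  have hline := (Complex.continuous_re.tendsto _).comp (hb.comp (tendsto_add_mul_I_nhdsNE a))
  refine ge_of_tendsto hline ?_
  filter_upwards [(tendsto_add_mul_I_nhdsNE a).eventually hf.axis] with t ht
  simpa [hg, ha, Complex.div_re] using ht (by simp [ha])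

lemma PosRealNear.eventually_neg_lt_re (hf : PosRealNear f a) (ha : a.re = 0) {ε : ℝ}
    (hε : 0 < ε) : ∀ᶠ s in 𝓝[≠] a, 0 < s.re → -ε < (f s).re := by
  obtain ⟨r, hr, b, hb, hlim⟩ := hf.exists_tendsto_sub_div ha
  have hre := (Complex.continuous_re.tendsto _).comp hlim
  filter_upwards [hre.eventually_const_lt (show -ε < b.re by linarith)] with s hs hspos
  have hpole : 0 ≤ ((r : ℂ) / (s - a)).re := by
    rw [Complex.div_re]
    simp only [Complex.ofReal_re, Complex.ofReal_im, Complex.sub_re, ha]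
    have := Complex.normSq_nonneg (s - a)
    rw [zero_mul, zero_div, add_zero, sub_zero]
    positivity
  simp only [Function.comp_apply, Complex.sub_re] at hs
  linarith

lemma PosRealNear.conj (hf : PosRealNear f a) : PosRealNear (star ∘ f ∘ star) (star a) := by
  have hstar : Tendsto (star : ℂ → ℂ) (𝓝[≠] star a) (𝓝[≠] a) := by
    refine tendsto_nhdsWithin_iff.mpr ⟨?_, ?_⟩
    · simpa using (continuous_star.tendsto (star a)).mono_left nhdsWithin_le_nhds
    · filter_upwards [self_mem_nhdsWithin] with s hs h
      exact hs (Set.mem_singleton_iff.mpr (by rw [← Set.mem_singleton_iff.mp h, star_star]))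
  obtain ⟨r, hr, hlim⟩ := hf.residue
  refine ⟨?_, ⟨r, hr, ?_⟩, ?_⟩
  · filter_upwards [hstar.eventually hf.differentiableAt] with s hs
    simpa using hs.star_star
  · have := (continuous_star.tendsto _).comp (hlim.comp hstar)
    simpa [Function.comp_def] using this
  · filter_upwards [hstar.eventually hf.axis] with s hs hsre
    simpa using hs (by simpa using hsre)

theorem re_nonneg_of_posRealNear (hf : DifferentiableOn ℂ f {s | 0 < s.re})
    (haxis : ∀ a : ℂ, a.re = 0 → PosRealNear f a) (hinf : PosRealNear (fun s => f s⁻¹) 0)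
    (hs : 0 < s.re) : 0 ≤ (f s).re := by
  refine re_nonneg_of_boundary hf (fun a ha ε hε => ?_) (fun ε hε => ?_) hs
  · filter_upwards [eventually_nhdsWithin_iff.mp ((haxis a ha).eventually_neg_lt_re ha hε)]
      with s hs hspos
    exact hs (fun h => hspos.ne' (h ▸ ha)) hspos
  · filter_upwards [tendsto_inv₀_cobounded'.eventually
      (hinf.eventually_neg_lt_re Complex.zero_re hε)] with s hs hspos
    have hs0 : s ≠ 0 := fun h => hspos.ne' (h ▸ Complex.zero_re)
    simp only [inv_inv] at hs
    exact hs (by rw [Complex.inv_re]; exact div_pos hspos (Complex.normSq_pos.mpr hs0))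

end MinimumPrinciple

section RationalFunctions

variable {f g : RatFunc ℝ} {s : ℂ}

lemma IsPoleAt.of_denom_dvd_mul {h : RatFunc ℝ} (hdvd : h.denom ∣ f.denom * g.denom)
    (hh : IsPoleAt h s) : IsPoleAt f s ∨ IsPoleAt g s := by
  have := Polynomial.eval₂_eq_zero_of_dvd_of_eval₂_eq_zero _ _ hdvd hh
  rwa [Polynomial.eval₂_mul, mul_eq_zero] at this

/-- The ring of real-rational functions without a pole at `s`. -/
def regularAt (s : ℂ) : Subring (RatFunc ℝ) where
  carrier := {f | ¬ IsPoleAt f s}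
  mul_mem' hf hg h := (h.of_denom_dvd_mul (RatFunc.denom_mul_dvd _ _)).elim hf hg
  one_mem' := by simp [IsPoleAt]
  add_mem' hf hg h := (h.of_denom_dvd_mul (RatFunc.denom_add_dvd _ _)).elim hf hg
  zero_mem' := by simp [IsPoleAt]
  neg_mem' {f} hf h := by
    rw [← neg_one_mul, ← map_one RatFunc.C, ← map_neg] at h
    exact (h.of_denom_dvd_mul (RatFunc.denom_mul_dvd _ _)).elim
      (by simp [IsPoleAt, -map_neg]) hf

lemma mem_regularAt : f ∈ regularAt s ↔ ¬ IsPoleAt f s := Iff.rfl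

/-- Evaluation at `s`, as a ring homomorphism on the rational functions regular at `s`. -/
def evalHom (s : ℂ) : regularAt s →+* ℂ where
  toFun f := evalC f s
  map_one' := by simp [evalC]
  map_mul' f g := RatFunc.eval_mul _ _ f.2 g.2
  map_zero' := by simp [evalC]
  map_add' f g := RatFunc.eval_add _ _ f.2 g.2

lemma C_mem_regularAt (c : ℝ) (s : ℂ) : RatFunc.C c ∈ regularAt s := by
  simp [mem_regularAt, IsPoleAt]

lemma X_mem_regularAt (s : ℂ) : RatFunc.X ∈ regularAt s := by simp [mem_regularAt, IsPoleAt]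

lemma evalC_C (c : ℝ) (s : ℂ) : evalC (RatFunc.C c) s = c := by simp [evalC]

lemma evalC_X (s : ℂ) : evalC RatFunc.X s = s := by simp [evalC]

lemma evalC_add (hf : f ∈ regularAt s) (hg : g ∈ regularAt s) :
    evalC (f + g) s = evalC f s + evalC g s :=
  map_add (evalHom s) ⟨f, hf⟩ ⟨g, hg⟩

lemma evalC_mul (hf : f ∈ regularAt s) (hg : g ∈ regularAt s) :
    evalC (f * g) s = evalC f s * evalC g s :=
  map_mul (evalHom s) ⟨f, hf⟩ ⟨g, hg⟩

lemma inv_mem_regularAt (hf : evalC f s ≠ 0) : f⁻¹ ∈ regularAt s := by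
  have hf0 : f ≠ 0 := by
    rintro rfl
    simp [evalC] at hf
  intro h
  have hnum := Polynomial.eval₂_eq_zero_of_dvd_of_eval₂_eq_zero _ _ (RatFunc.denom_inv_dvd hf0) h
  exact hf (by rw [evalC, RatFunc.eval, hnum, zero_div])

lemma evalC_inv (hf : f ∈ regularAt s) (hf0 : evalC f s ≠ 0) : evalC f⁻¹ s = (evalC f s)⁻¹ := by
  have hne : f ≠ 0 := by
    rintro rfl
    simp [evalC] at hf0
  refine eq_inv_of_mul_eq_one_right ?_
  rw [← evalC_mul hf (inv_mem_regularAt hf0), mul_inv_cancel₀ hne]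
  simp [evalC]

lemma eval₂_star (p : ℝ[X]) (s : ℂ) :
    p.eval₂ (algebraMap ℝ ℂ) (star s) = star (p.eval₂ (algebraMap ℝ ℂ) s) := by
  have hcomp : (starRingEnd ℂ).comp (algebraMap ℝ ℂ) = algebraMap ℝ ℂ := by
    ext x
    simp
  have := Polynomial.hom_eval₂ p (algebraMap ℝ ℂ) (starRingEnd ℂ) s
  rw [hcomp] at this
  exact this.symm

lemma evalC_star (f : RatFunc ℝ) (s : ℂ) : evalC f (star s) = star (evalC f s) := by
  simp only [evalC, RatFunc.eval, eval₂_star, star_div₀]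

lemma isPoleAt_star : IsPoleAt f (star s) ↔ IsPoleAt f s := by
  rw [IsPoleAt, eval₂_star, star_eq_zero, IsPoleAt]

lemma evalC_ofReal (f : RatFunc ℝ) (x : ℝ) :
    evalC f x = (f.eval (RingHom.id ℝ) x : ℝ) := by
  simp only [evalC, RatFunc.eval, Polynomial.eval₂_id, Complex.ofReal_div]
  simp [← Complex.coe_algebraMap, Polynomial.eval₂_at_apply]

lemma eventually_mem_regularAt {l : Filter ℂ} (hl : l ≤ cofinite) (f : RatFunc ℝ) :
    ∀ᶠ s in l, f ∈ regularAt s := by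
  have hdenom : f.denom.map (algebraMap ℝ ℂ) ≠ 0 :=
    (Polynomial.map_ne_zero_iff (algebraMap ℝ ℂ).injective).mpr f.denom_ne_zero
  filter_upwards [hl (Polynomial.eventually_cofinite_not_isRoot hdenom)] with s hs
  simpa [mem_regularAt, IsPoleAt, Polynomial.IsRoot, Polynomial.eval_map] using hs

lemma differentiable_eval₂ (p : ℝ[X]) :
    Differentiable ℂ fun s : ℂ => p.eval₂ (algebraMap ℝ ℂ) s := by
  simpa only [Polynomial.eval₂_eq_eval_map] using Polynomial.differentiable _

lemma differentiableAt_evalC (hf : f ∈ regularAt s) : DifferentiableAt ℂ (evalC f) s :=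
  (differentiable_eval₂ _ s).div (differentiable_eval₂ _ s) hf

lemma mem_regularAt_of_isBigO_one {l : Filter ℂ} [l.NeBot] (hl : l ≤ 𝓝[≠] s)
    (hf : evalC f =O[l] (1 : ℂ → ℂ)) : f ∈ regularAt s := by
  intro hpole
  have hnhds : l ≤ 𝓝 s := hl.trans nhdsWithin_le_nhds
  have hdenom : Tendsto (fun z => f.denom.eval₂ (algebraMap ℝ ℂ) z) l (𝓝 0) := by
    simpa only [hpole.symm] using ((differentiable_eval₂ _).continuous.tendsto s).mono_left hnhds
  have hnum : Tendsto (fun z => f.num.eval₂ (algebraMap ℝ ℂ) z) l (𝓝 0) := by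
    refine ((hf.mul_isLittleO ((Asymptotics.isLittleO_one_iff ℂ).mpr hdenom)).congr' ?_ ?_
      |> (Asymptotics.isLittleO_one_iff ℂ).mp)
    · filter_upwards [eventually_mem_regularAt (hl.trans (nhdsNE_le_cofinite s)) f] with z hz
      exact div_mul_cancel₀ _ hz
    · simp
  have hnum0 := tendsto_nhds_unique hnum
    (((differentiable_eval₂ f.num).continuous.tendsto s).mono_left hnhds)
  obtain ⟨a, b, hab⟩ := f.isCoprime_num_denom
  have := congrArg (Polynomial.eval₂ (algebraMap ℝ ℂ) s) hab
  simp [← hnum0, show f.denom.eval₂ (algebraMap ℝ ℂ) s = 0 from hpole] at this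

lemma degree_num_le_of_isBigO_one (hf : evalC f =O[Bornology.cobounded ℂ] (1 : ℂ → ℂ)) :
    f.num.degree ≤ f.denom.degree := by
  by_contra! hlt
  have hlittle : (f.denom.map (algebraMap ℝ ℂ)).eval =o[Bornology.cobounded ℂ]
      (f.num.map (algebraMap ℝ ℂ)).eval :=
    Polynomial.isLittleO_cobounded_of_degree_lt (by simpa [Polynomial.degree_map] using hlt)
  have hbig : (f.num.map (algebraMap ℝ ℂ)).eval =O[Bornology.cobounded ℂ]
      (f.denom.map (algebraMap ℝ ℂ)).eval := by
    refine (hf.mul (Asymptotics.isBigO_refl (f.denom.map (algebraMap ℝ ℂ)).eval _)).congr' ?_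
      (by simp)
    filter_upwards [eventually_mem_regularAt (Bornology.le_cofinite ℂ) f] with z hz
    simpa only [evalC, RatFunc.eval, Polynomial.eval₂_eq_eval_map] using div_mul_cancel₀ _
      (by simpa only [mem_regularAt, IsPoleAt, Polynomial.eval₂_eq_eval_map] using hz)
  refine Asymptotics.isLittleO_irrefl (Eventually.frequently ?_) (hlittle.trans_isBigO hbig)
  filter_upwards [eventually_mem_regularAt (Bornology.le_cofinite ℂ) f] with z hz
  simpa only [mem_regularAt, IsPoleAt, Polynomial.eval₂_eq_eval_map] using hz

lemma tendsto_evalC_cobounded (hf : f.num.degree ≤ f.denom.degree) :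
    Tendsto (evalC f) (Bornology.cobounded ℂ) (𝓝 (atInfinity f)) := by
  have heval : evalC f =
      fun s => (f.num.map (algebraMap ℝ ℂ)).eval s / (f.denom.map (algebraMap ℝ ℂ)).eval s := by
    ext s
    simp only [evalC, RatFunc.eval, Polynomial.eval₂_eq_eval_map]
  rw [heval, atInfinity]
  split_ifs with hdeg
  · have hequiv := (Polynomial.isEquivalent_cobounded_leading_monomial
      (P := f.num.map (algebraMap ℝ ℂ))).div (Polynomial.isEquivalent_cobounded_leading_monomial
      (P := f.denom.map (algebraMap ℝ ℂ)))
    refine (hequiv.symm.tendsto_nhds ?_)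
    refine tendsto_const_nhds.congr' ?_
    filter_upwards [(Bornology.le_cofinite ℂ) (eventually_cofinite_ne 0)] with s hs
    simp [Polynomial.natDegree_eq_of_degree_eq hdeg, mul_div_mul_right _ _ (pow_ne_zero _ hs)]
  · simpa using (Polynomial.isLittleO_cobounded_of_degree_lt
      (P := f.num.map (algebraMap ℝ ℂ)) (Q := f.denom.map (algebraMap ℝ ℂ))
      (by simpa [Polynomial.degree_map] using lt_of_le_of_ne hf hdeg)).tendsto_div_nhds_zero

end RationalFunctions

section TransferMatrices

variable {G H : Matrix (Fin n) (Fin n) (RatFunc ℝ)} {f : RatFunc ℝ} {s : ℂ}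

lemma not_hasPole_iff : ¬ HasPole G s ↔ ∀ i j, G i j ∈ regularAt s := by
  simp only [HasPole, not_exists, mem_regularAt]

lemma exists_mapMatrix_eq (hG : ¬ HasPole G s) :
    ∃ G' : Matrix (Fin n) (Fin n) (regularAt s), (regularAt s).subtype.mapMatrix G' = G :=
  ⟨of fun i j => ⟨G i j, not_hasPole_iff.mp hG i j⟩, rfl⟩

lemma not_hasPole_mapMatrix (G' : Matrix (Fin n) (Fin n) (regularAt s)) :
    ¬ HasPole ((regularAt s).subtype.mapMatrix G') s :=
  not_hasPole_iff.mpr fun i j => (G' i j).2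

lemma evalM_mapMatrix (G' : Matrix (Fin n) (Fin n) (regularAt s)) :
    evalM ((regularAt s).subtype.mapMatrix G') s = (evalHom s).mapMatrix G' := rfl

lemma not_hasPole_mul (hG : ¬ HasPole G s) (hH : ¬ HasPole H s) : ¬ HasPole (G * H) s := by
  obtain ⟨G', rfl⟩ := exists_mapMatrix_eq hG
  obtain ⟨H', rfl⟩ := exists_mapMatrix_eq hH
  exact map_mul (regularAt s).subtype.mapMatrix G' H' ▸ not_hasPole_mapMatrix _

lemma not_hasPole_one_sub (hG : ¬ HasPole G s) : ¬ HasPole (1 - G) s := by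
  obtain ⟨G', rfl⟩ := exists_mapMatrix_eq hG
  rw [← map_one (regularAt s).subtype.mapMatrix, ← map_sub]
  exact not_hasPole_mapMatrix _

lemma evalM_one (s : ℂ) : evalM (1 : Matrix (Fin n) (Fin n) (RatFunc ℝ)) s = 1 := by
  rw [← map_one (regularAt s).subtype.mapMatrix, evalM_mapMatrix, map_one]

lemma evalM_mul (hG : ¬ HasPole G s) (hH : ¬ HasPole H s) :
    evalM (G * H) s = evalM G s * evalM H s := by
  obtain ⟨G', rfl⟩ := exists_mapMatrix_eq hG
  obtain ⟨H', rfl⟩ := exists_mapMatrix_eq hH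
  rw [← map_mul, evalM_mapMatrix, evalM_mapMatrix, evalM_mapMatrix, map_mul]

lemma evalM_one_sub (hG : ¬ HasPole G s) : evalM (1 - G) s = 1 - evalM G s := by
  obtain ⟨G', rfl⟩ := exists_mapMatrix_eq hG
  rw [← map_one (regularAt s).subtype.mapMatrix, ← map_sub, evalM_mapMatrix, evalM_mapMatrix,
    map_sub, map_one]

lemma not_hasPole_add (hG : ¬ HasPole G s) (hH : ¬ HasPole H s) : ¬ HasPole (G + H) s :=
  not_hasPole_iff.mpr fun i j =>
    add_mem (not_hasPole_iff.mp hG i j) (not_hasPole_iff.mp hH i j)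

lemma not_hasPole_smul (hf : f ∈ regularAt s) (hG : ¬ HasPole G s) : ¬ HasPole (f • G) s :=
  not_hasPole_iff.mpr fun i j => mul_mem hf (not_hasPole_iff.mp hG i j)

lemma not_hasPole_map_C (A : Matrix (Fin n) (Fin n) ℝ) (s : ℂ) :
    ¬ HasPole (A.map RatFunc.C) s :=
  not_hasPole_iff.mpr fun i j => C_mem_regularAt (A i j) s

lemma not_hasPole_one (s : ℂ) : ¬ HasPole (1 : Matrix (Fin n) (Fin n) (RatFunc ℝ)) s := by
  rw [← map_one (regularAt s).subtype.mapMatrix]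
  exact not_hasPole_mapMatrix _

lemma evalM_add (hG : ¬ HasPole G s) (hH : ¬ HasPole H s) :
    evalM (G + H) s = evalM G s + evalM H s :=
  Matrix.ext fun i j => evalC_add (not_hasPole_iff.mp hG i j) (not_hasPole_iff.mp hH i j)

lemma evalM_smul (hf : f ∈ regularAt s) (hG : ¬ HasPole G s) :
    evalM (f • G) s = evalC f s • evalM G s :=
  Matrix.ext fun i j => evalC_mul hf (not_hasPole_iff.mp hG i j)

lemma evalM_map_C (A : Matrix (Fin n) (Fin n) ℝ) (s : ℂ) :
    evalM (A.map RatFunc.C) s = A.map Complex.ofReal :=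
  Matrix.ext fun i j => evalC_C (A i j) s

lemma evalC_det (hG : ¬ HasPole G s) : evalC G.det s = (evalM G s).det := by
  obtain ⟨G', rfl⟩ := exists_mapMatrix_eq hG
  rw [← RingHom.map_det, evalM_mapMatrix, ← RingHom.map_det]
  rfl

lemma evalM_star (G : Matrix (Fin n) (Fin n) (RatFunc ℝ)) (s : ℂ) :
    evalM G (star s) = (evalM G s).map star := by
  ext i j
  exact evalC_star _ _

lemma evalM_zero (G : Matrix (Fin n) (Fin n) (RatFunc ℝ)) :
    evalM G 0 = (evalR G 0).map Complex.ofReal := by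
  ext i j
  simpa [evalM, evalR] using evalC_ofReal (G i j) 0

lemma eventually_not_hasPole {l : Filter ℂ} (hl : l ≤ cofinite)
    (G : Matrix (Fin n) (Fin n) (RatFunc ℝ)) : ∀ᶠ s in l, ¬ HasPole G s := by
  simp only [not_hasPole_iff, eventually_all]
  exact fun i j => eventually_mem_regularAt hl _

lemma continuousAt_evalM (hG : ¬ HasPole G s) : ContinuousAt (evalM G) s :=
  continuousAt_pi.mpr fun i => continuousAt_pi.mpr fun j =>
    (differentiableAt_evalC (not_hasPole_iff.mp hG i j)).continuousAt

lemma differentiableAt_dotProduct_evalM_mulVec (hG : ¬ HasPole G s) {x y : ℂ → Fin n → ℂ}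
    (hx : DifferentiableAt ℂ x s) (hy : DifferentiableAt ℂ y s) :
    DifferentiableAt ℂ (fun z => x z ⬝ᵥ evalM G z *ᵥ y z) s := by
  simp only [dotProduct, mulVec]
  have hG' (i j) : DifferentiableAt ℂ (fun z => evalM G z i j) s :=
    differentiableAt_evalC (not_hasPole_iff.mp hG i j)
  fun_prop

lemma tendsto_evalM_cobounded (hG : Proper G) :
    Tendsto (evalM G) (Bornology.cobounded ℂ) (𝓝 ((evalInf G).map Complex.ofReal)) :=
  tendsto_pi_nhds.mpr fun i => tendsto_pi_nhds.mpr fun j => tendsto_evalC_cobounded (hG i j)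

end TransferMatrices

section QuadraticForms

variable {M : Matrix (Fin n) (Fin n) ℂ} {A : Matrix (Fin n) (Fin n) ℝ}

lemma star_dotProduct_mulVec_comm (M : Matrix (Fin n) (Fin n) ℂ) (u v : Fin n → ℂ) :
    star v ⬝ᵥ Mᴴ *ᵥ u = star (star u ⬝ᵥ M *ᵥ v) := by
  rw [star_dotProduct, star_mulVec, conjTranspose_conjTranspose, ← dotProduct_mulVec]

lemma posSemidef_iff_re_nonneg (hM : M.IsHermitian) :
    M.PosSemidef ↔ ∀ u, 0 ≤ (star u ⬝ᵥ M *ᵥ u).re := by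
  simp only [posSemidef_iff_dotProduct_mulVec, hM, true_and, Complex.nonneg_iff]
  exact forall_congr' fun u => and_iff_left (hM.im_star_dotProduct_mulVec_self u).symm

lemma posDef_iff_re_pos (hM : M.IsHermitian) :
    M.PosDef ↔ ∀ u ≠ 0, 0 < (star u ⬝ᵥ M *ᵥ u).re := by
  simp only [posDef_iff_dotProduct_mulVec, hM, true_and, Complex.pos_iff]
  exact forall₂_congr fun u _ => and_iff_left (hM.im_star_dotProduct_mulVec_self u).symm

lemma isHermitian_niKer (M : Matrix (Fin n) (Fin n) ℂ) : (niKer M).IsHermitian := by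
  simp [IsHermitian, niKer, conjTranspose_sub, conjTranspose_smul, ← smul_neg]

lemma re_star_dotProduct_niKer_mulVec (M : Matrix (Fin n) (Fin n) ℂ) (u : Fin n → ℂ) :
    (star u ⬝ᵥ niKer M *ᵥ u).re = -2 * (star u ⬝ᵥ M *ᵥ u).im := by
  rw [niKer, smul_mulVec, sub_mulVec, dotProduct_smul, dotProduct_sub,
    star_dotProduct_mulVec_comm]
  simp only [RCLike.star_def, smul_eq_mul, Complex.mul_re, Complex.I_re, Complex.I_im,
    Complex.sub_im, Complex.conj_im]
  ring

lemma posSemidef_niKer_iff :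
    (niKer M).PosSemidef ↔ ∀ u, (star u ⬝ᵥ M *ᵥ u).im ≤ 0 := by
  rw [posSemidef_iff_re_nonneg (isHermitian_niKer M)]
  refine forall_congr' fun u => ?_
  rw [re_star_dotProduct_niKer_mulVec]
  constructor <;> intro h <;> linarith

lemma posDef_niKer_iff : (niKer M).PosDef ↔ ∀ u ≠ 0, (star u ⬝ᵥ M *ᵥ u).im < 0 := by
  rw [posDef_iff_re_pos (isHermitian_niKer M)]
  refine forall₂_congr fun u _ => ?_
  rw [re_star_dotProduct_niKer_mulVec]
  constructor <;> intro h <;> linarith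

lemma re_star_dotProduct_map_ofReal_mulVec (A : Matrix (Fin n) (Fin n) ℝ) (z : Fin n → ℂ) :
    (star z ⬝ᵥ A.map Complex.ofReal *ᵥ z).re =
      (fun i => (z i).re) ⬝ᵥ A *ᵥ (fun i => (z i).re) +
        (fun i => (z i).im) ⬝ᵥ A *ᵥ (fun i => (z i).im) := by
  simp [dotProduct, mulVec, Finset.sum_add_distrib]

lemma isHermitian_map_ofReal : (A.map Complex.ofReal).IsHermitian ↔ A.IsHermitian := by
  simp only [IsHermitian.ext_iff, map_apply, Complex.star_def, Complex.conj_ofReal,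
    Complex.ofReal_inj, star_trivial]

lemma posSemidef_map_ofReal : (A.map Complex.ofReal).PosSemidef ↔ A.PosSemidef := by
  refine ⟨fun h => ?_, fun h => ?_⟩
  · refine .of_dotProduct_mulVec_nonneg (isHermitian_map_ofReal.mp h.isHermitian) fun x => ?_
    simpa [re_star_dotProduct_map_ofReal_mulVec, ← Pi.zero_def] using
      (posSemidef_iff_re_nonneg h.isHermitian).mp h fun i => (x i : ℂ)
  · refine (posSemidef_iff_re_nonneg (isHermitian_map_ofReal.mpr h.isHermitian)).mpr fun z => ?_
    rw [re_star_dotProduct_map_ofReal_mulVec]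
    exact add_nonneg (h.dotProduct_mulVec_nonneg _) (h.dotProduct_mulVec_nonneg _)

lemma posDef_map_ofReal : (A.map Complex.ofReal).PosDef ↔ A.PosDef := by
  refine ⟨fun h => ?_, fun h => ?_⟩
  · refine .of_dotProduct_mulVec_pos (isHermitian_map_ofReal.mp h.isHermitian) fun x hx => ?_
    have hx' : (fun i => (x i : ℂ)) ≠ 0 := fun h0 => hx (funext fun i => by
      simpa using congrFun h0 i)
    simpa [re_star_dotProduct_map_ofReal_mulVec, ← Pi.zero_def] using
      (posDef_iff_re_pos h.isHermitian).mp h _ hx'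
  · refine (posDef_iff_re_pos (isHermitian_map_ofReal.mpr h.isHermitian)).mpr fun z hz => ?_
    rw [re_star_dotProduct_map_ofReal_mulVec]
    by_cases hre : (fun i => (z i).re) = 0
    · have him : (fun i => (z i).im) ≠ 0 := fun h0 => hz (funext fun i =>
        Complex.ext (congrFun hre i) (congrFun h0 i))
      exact add_pos_of_nonneg_of_pos (h.posSemidef.dotProduct_mulVec_nonneg _)
        (h.dotProduct_mulVec_pos him)
    · exact add_pos_of_pos_of_nonneg (h.dotProduct_mulVec_pos hre)
        (h.posSemidef.dotProduct_mulVec_nonneg _)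

lemma map_ofReal_smul_one (c : ℝ) :
    (c • 1 : Matrix (Fin n) (Fin n) ℝ).map Complex.ofReal = (c : ℂ) • 1 := by
  ext i j
  by_cases hij : i = j <;> simp [hij]

lemma map_ofReal_smul_one_sub (c : ℝ) (A : Matrix (Fin n) (Fin n) ℝ) :
    (c • 1 - A).map Complex.ofReal = (c : ℂ) • 1 - A.map Complex.ofReal := by
  rw [Matrix.map_sub _ Complex.ofReal_sub, map_ofReal_smul_one]

lemma posSemidef_smul_one_sub_iff (hM : M.IsHermitian) {c : ℝ} :
    ((c : ℂ) • 1 - M).PosSemidef ↔ ∀ u, (star u ⬝ᵥ M *ᵥ u).re ≤ c * (star u ⬝ᵥ u).re := by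
  rw [posSemidef_iff_re_nonneg ((isHermitian_one.smul (Complex.conj_ofReal c)).sub hM)]
  simp only [sub_mulVec, smul_mulVec, one_mulVec, dotProduct_sub, dotProduct_smul, smul_eq_mul,
    Complex.sub_re, Complex.re_ofReal_mul, sub_nonneg]

lemma loewnerLT_smul_one_iff {G : Matrix (Fin n) (Fin n) (RatFunc ℝ)} {c : ℝ} :
    LoewnerLT (evalR G 0) (c • 1) ↔ ((c : ℂ) • 1 - evalM G 0).PosDef := by
  rw [LoewnerLT, ← posDef_map_ofReal, map_ofReal_smul_one_sub, evalM_zero]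

lemma loewnerLE_smul_one_iff {G : Matrix (Fin n) (Fin n) (RatFunc ℝ)} {c : ℝ} :
    LoewnerLE (evalR G 0) (c • 1) ↔ ((c : ℂ) • 1 - evalM G 0).PosSemidef := by
  rw [LoewnerLE, ← posSemidef_map_ofReal, map_ofReal_smul_one_sub, evalM_zero]

end QuadraticForms

section PositiveRealForm

variable {G : Matrix (Fin n) (Fin n) (RatFunc ℝ)} {u v w : Fin n → ℂ} {s : ℂ} {ω : ℝ}

lemma tendsto_dotProduct_mulVec {ι : Type*} {l : Filter ι} {a b : ι → Fin n → ℂ}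
    {M : ι → Matrix (Fin n) (Fin n) ℂ} {a₀ b₀ : Fin n → ℂ} {M₀ : Matrix (Fin n) (Fin n) ℂ}
    (ha : Tendsto a l (𝓝 a₀)) (hM : Tendsto M l (𝓝 M₀)) (hb : Tendsto b l (𝓝 b₀)) :
    Tendsto (fun i => a i ⬝ᵥ M i *ᵥ b i) l (𝓝 (a₀ ⬝ᵥ M₀ *ᵥ b₀)) := by
  simp only [dotProduct, mulVec]
  refine tendsto_finsetSum _ fun i _ => (tendsto_pi_nhds.mp ha i).mul ?_
  refine tendsto_finsetSum _ fun j _ => ?_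
  exact (tendsto_pi_nhds.mp (tendsto_pi_nhds.mp hM i) j).mul (tendsto_pi_nhds.mp hb j)

lemma re_jw (ω : ℝ) : (jw ω).re = 0 := by simp [jw]

lemma im_jw (ω : ℝ) : (jw ω).im = ω := by simp [jw]

lemma eq_jw_im (hs : s.re = 0) : s = jw s.im :=
  Complex.ext (hs.trans (re_jw _).symm) (im_jw _).symm

lemma jw_ne_zero (hω : ω ≠ 0) : jw ω ≠ 0 := by simpa [jw] using hω

lemma star_jw (ω : ℝ) : star (jw ω) = jw (-ω) := by simp [jw]

lemma jw_injective : Function.Injective jw := fun a b h => by simpa [jw] using h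

lemma tendsto_jw_nhdsNE (ω : ℝ) : Tendsto jw (𝓝[≠] ω) (𝓝[≠] jw ω) := by
  have hcont : Continuous jw := by unfold jw; fun_prop
  exact hcont.continuousWithinAt.tendsto_nhdsWithin fun a ha => jw_injective.ne ha

lemma IsNI.im_nonpos (hG : IsNI G) (hω : 0 < ω) (hpole : ¬ HasPole G (jw ω)) (u : Fin n → ℂ) :
    (star u ⬝ᵥ evalM G (jw ω) *ᵥ u).im ≤ 0 :=
  posSemidef_niKer_iff.mp (hG.2.2.1 ω hω hpole) u

lemma IsSNI.im_neg (hG : IsSNI G) (hω : 0 < ω) (hu : u ≠ 0) :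
    (star u ⬝ᵥ evalM G (jw ω) *ᵥ u).im < 0 :=
  posDef_niKer_iff.mp (hG.2 ω hω) u hu

lemma MemRHinf.not_hasPole (hG : MemRHinf G) (hs : 0 ≤ s.re) : ¬ HasPole G s :=
  not_hasPole_iff.mpr (hG.2 s hs)

lemma IsSNI.isNI (hG : IsSNI G) : IsNI G :=
  ⟨hG.1.1, fun _ hs => hG.1.not_hasPole hs.le, fun ω hω _ => (hG.2 ω hω).posSemidef,
    fun _ _ h => absurd h (hG.1.not_hasPole (re_jw _).ge),
    fun h => absurd h (hG.1.not_hasPole le_rfl)⟩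

lemma IsNI.exists_residue (hG : IsNI G) (hω : 0 < ω) :
    ∃ R : Matrix (Fin n) (Fin n) ℂ, R.PosSemidef ∧
      Tendsto (fun s : ℂ => (s - jw ω) • Complex.I • evalM G s) (𝓝[≠] jw ω) (𝓝 R) := by
  by_cases hpole : HasPole G (jw ω)
  · exact hG.2.2.2.1 ω hω hpole
  · refine ⟨0, .zero, ?_⟩
    have hsub : Tendsto (fun s => s - jw ω) (𝓝[≠] jw ω) (𝓝 0) :=
      tendsto_sub_nhds_zero_iff.mpr nhdsWithin_le_nhds
    have hreg : Tendsto (evalM G) (𝓝[≠] jw ω) (𝓝 (evalM G (jw ω))) :=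
      (continuousAt_evalM hpole).tendsto.mono_left nhdsWithin_le_nhds
    simpa using hsub.smul (hreg.const_smul Complex.I)

-- A real matrix has `niKer` of trace zero, and a positive semidefinite matrix of trace zero
-- vanishes.
lemma IsNI.isHermitian_evalM_zero (hG : IsNI G) (hG0 : ¬ HasPole G 0) :
    (evalM G 0).IsHermitian := by
  have hjw : Tendsto jw (𝓝[>] 0) (𝓝[≠] 0) := by
    simpa [jw] using (tendsto_jw_nhdsNE 0).mono_left (nhdsGT_le_nhdsNE 0)
  have hlim : Tendsto (fun ω => evalM G (jw ω)) (𝓝[>] 0) (𝓝 (evalM G 0)) :=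
    (continuousAt_evalM hG0).tendsto.comp (hjw.mono_right nhdsWithin_le_nhds)
  have hker : (niKer (evalM G 0)).PosSemidef := by
    refine posSemidef_niKer_iff.mpr fun u => le_of_tendsto
      ((Complex.continuous_im.tendsto _).comp
        (tendsto_dotProduct_mulVec tendsto_const_nhds hlim tendsto_const_nhds)) ?_
    filter_upwards [self_mem_nhdsWithin,
      hjw.eventually (eventually_not_hasPole (nhdsNE_le_cofinite 0) G)] with ω hω hpole
    exact hG.im_nonpos hω hpole u
  have htrace : (niKer (evalM G 0)).trace = 0 := by
    rw [niKer, trace_smul, trace_sub, trace_conjTranspose, evalM_zero]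
    simp [trace]
  have hzero := hker.trace_eq_zero_iff.mp htrace
  rw [niKer, smul_eq_zero_iff_right Complex.I_ne_zero, sub_eq_zero] at hzero
  exact hzero.symm

/-- For negative imaginary `G`, vectors `v`, `w` and `ξ = s v + w`, the continuation off the
imaginary axis of `(w* G(0) w - ξ* G(s) ξ) / s`, using `ξ* = star w - s * star v` for `s = jω`.
Its positive realness carries the frequency-domain inequality into the right half-plane. -/
def niForm (G : Matrix (Fin n) (Fin n) (RatFunc ℝ)) (v w : Fin n → ℂ) (s : ℂ) : ℂ :=
  ((s • star v - star w) ⬝ᵥ evalM G s *ᵥ (s • v + w) + star w ⬝ᵥ evalM G 0 *ᵥ w) / s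

lemma niForm_star (G : Matrix (Fin n) (Fin n) (RatFunc ℝ)) (v w : Fin n → ℂ) :
    star ∘ niForm G (star v) (star w) ∘ star = niForm G v w := by
  have hstar (M : Matrix (Fin n) (Fin n) ℂ) (a b : Fin n → ℂ) :
      star (a ⬝ᵥ M *ᵥ b) = star a ⬝ᵥ M.map star *ᵥ star b := by
    simp [dotProduct, mulVec]
  have hreal : evalM G 0 = (evalM G 0).map star := by simpa using evalM_star G 0
  ext s
  have hmap : (evalM G (star s)).map star = evalM G s := by rw [← evalM_star, star_star]
  simp only [Function.comp_apply, niForm, star_div₀, star_add, hstar, star_sub, star_smul,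
    star_star, hmap, ← hreal]

lemma differentiableAt_niForm (hG : ¬ HasPole G s) (hs : s ≠ 0) (v w : Fin n → ℂ) :
    DifferentiableAt ℂ (niForm G v w) s := by
  refine ((differentiableAt_dotProduct_evalM_mulVec hG ?_ ?_).add_const _).div
    differentiableAt_id hs <;> fun_prop

lemma jw_smul_star_sub_star (ω : ℝ) (v w : Fin n → ℂ) :
    jw ω • star v - star w = -star (jw ω • v + w) := by
  have hneg : jw (-ω) = -jw ω := by simp [jw]
  rw [star_add, star_smul, star_jw, hneg]
  module

lemma re_niForm_jw (hG0 : (evalM G 0).IsHermitian) (hω : ω ≠ 0) (v w : Fin n → ℂ) :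
    (niForm G v w (jw ω)).re =
      -(star (jw ω • v + w) ⬝ᵥ evalM G (jw ω) *ᵥ (jw ω • v + w)).im / ω := by
  have him : (star w ⬝ᵥ evalM G 0 *ᵥ w).im = 0 := hG0.im_star_dotProduct_mulVec_self w
  rw [niForm, jw_smul_star_sub_star, neg_dotProduct]
  simp only [Complex.div_re, Complex.normSq_apply, Complex.add_im, Complex.neg_im, him, re_jw,
    im_jw, mul_zero, zero_div, zero_add, add_zero]
  field_simp

lemma IsNI.re_niForm_nonneg_of_re_eq_zero (hG : IsNI G) (hG0 : ¬ HasPole G 0) (hs : s.re = 0)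
    (hs0 : s ≠ 0) (hpole : ¬ HasPole G s) (v w : Fin n → ℂ) : 0 ≤ (niForm G v w s).re := by
  have hpos {ω : ℝ} (hω : 0 < ω) (hpole : ¬ HasPole G (jw ω)) (v w : Fin n → ℂ) :
      0 ≤ (niForm G v w (jw ω)).re := by
    rw [re_niForm_jw (hG.isHermitian_evalM_zero hG0) hω.ne']
    exact div_nonneg (neg_nonneg.mpr (hG.im_nonpos hω hpole _)) hω.le
  have him : s.im ≠ 0 := fun h => hs0 (Complex.ext hs h)
  rw [eq_jw_im hs] at hpole ⊢
  rcases him.lt_or_gt with hneg | hpos'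
  · rw [← niForm_star, Function.comp_apply, Function.comp_apply, star_jw, Complex.star_def,
      Complex.conj_re]
    refine hpos (neg_pos.mpr hneg) ?_ _ _
    rw [← star_jw]
    exact fun ⟨i, j, h⟩ => hpole ⟨i, j, isPoleAt_star.mp h⟩
  · exact hpos hpos' hpole v w

lemma IsNI.eventually_niForm (hG : IsNI G) (hG0 : ¬ HasPole G 0) {l : Filter ℂ}
    (hl : l ≤ cofinite) (v w : Fin n → ℂ) :
    ∀ᶠ s in l, DifferentiableAt ℂ (niForm G v w) s ∧ (s.re = 0 → 0 ≤ (niForm G v w s).re) := by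
  filter_upwards [eventually_not_hasPole hl G, hl (eventually_cofinite_ne 0)] with s hpole hs0
  exact ⟨differentiableAt_niForm hpole hs0 v w,
    fun hs => hG.re_niForm_nonneg_of_re_eq_zero hG0 hs hs0 hpole v w⟩

lemma IsNI.posRealNear_niForm_zero (hG : IsNI G) (hG0 : ¬ HasPole G 0) (v w : Fin n → ℂ) :
    PosRealNear (niForm G v w) 0 := by
  have hnear := hG.eventually_niForm hG0 (nhdsNE_le_cofinite 0) v w
  refine ⟨hnear.mono fun _ h => h.1, ⟨0, le_rfl, ?_⟩, hnear.mono fun _ h => h.2⟩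
  have hleft : Tendsto (fun s : ℂ => s • star v - star w) (𝓝 0) (𝓝 (-star w)) := by
    have : Continuous fun s : ℂ => s • star v - star w := by fun_prop
    simpa using this.tendsto 0
  have hright : Tendsto (fun s : ℂ => s • v + w) (𝓝 0) (𝓝 w) := by
    have : Continuous fun s : ℂ => s • v + w := by fun_prop
    simpa using this.tendsto 0
  have hnum := (tendsto_dotProduct_mulVec hleft (continuousAt_evalM hG0) hright).add_const
    (star w ⬝ᵥ evalM G 0 *ᵥ w)
  rw [neg_dotProduct, neg_add_cancel] at hnum
  refine (hnum.mono_left nhdsWithin_le_nhds).congr' ?_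
  filter_upwards [self_mem_nhdsWithin] with s hs
  rw [sub_zero, niForm, mul_div_cancel₀ _ hs]

lemma IsNI.posRealNear_niForm_jw_of_pos (hG : IsNI G) (hG0 : ¬ HasPole G 0) (hω : 0 < ω)
    (v w : Fin n → ℂ) : PosRealNear (niForm G v w) (jw ω) := by
  have hnear := hG.eventually_niForm hG0 (nhdsNE_le_cofinite (jw ω)) v w
  obtain ⟨R, hR, hlim⟩ := hG.exists_residue hω
  set ξ := jw ω • v + w with hξ
  refine ⟨hnear.mono fun _ h => h.1, ⟨(star ξ ⬝ᵥ R *ᵥ ξ).re / ω, ?_, ?_⟩,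
    hnear.mono fun _ h => h.2⟩
  · exact div_nonneg ((posSemidef_iff_re_nonneg hR.isHermitian).mp hR ξ) hω.le
  have hid : Tendsto (fun s : ℂ => s) (𝓝[≠] jw ω) (𝓝 (jw ω)) := nhdsWithin_le_nhds
  have hlim' : Tendsto (fun s => (s - jw ω) • evalM G s) (𝓝[≠] jw ω) (𝓝 (-Complex.I • R)) := by
    refine (hlim.const_smul (-Complex.I)).congr fun s => ?_
    rw [smul_comm (s - jw ω), smul_smul, neg_mul, Complex.I_mul_I, neg_neg, one_smul]
  have hform := tendsto_dotProduct_mulVec ((hid.smul_const (star v)).sub_const (star w)) hlim'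
    ((hid.smul_const v).add_const w)
  have hstatic := (tendsto_sub_nhds_zero_iff.mpr hid).mul_const (star w ⬝ᵥ evalM G 0 *ᵥ w)
  have hres := (hform.add hstatic).div hid (jw_ne_zero hω.ne')
  have hval : (((star ξ ⬝ᵥ R *ᵥ ξ).re / ω : ℝ) : ℂ) =
      ((jw ω • star v - star w) ⬝ᵥ (-Complex.I • R) *ᵥ (jw ω • v + w) +
        0 * (star w ⬝ᵥ evalM G 0 *ᵥ w)) / jw ω := by
    have hreal : ((star ξ ⬝ᵥ R *ᵥ ξ).re : ℂ) = star ξ ⬝ᵥ R *ᵥ ξ :=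
      Complex.ext rfl
        (hR.isHermitian.im_star_dotProduct_mulVec_self ξ).symm
    rw [jw_smul_star_sub_star, ← hξ, neg_dotProduct, Complex.ofReal_div, hreal, smul_mulVec,
      dotProduct_smul, smul_eq_mul, jw]
    field_simp
    ring
  rw [hval]
  refine hres.congr fun s => ?_
  simp only [niForm, smul_mulVec, dotProduct_smul, smul_eq_mul, Pi.div_apply]
  ring

lemma IsNI.posRealNear_niForm (hG : IsNI G) (hG0 : ¬ HasPole G 0) (v w : Fin n → ℂ) {a : ℂ}
    (ha : a.re = 0) : PosRealNear (niForm G v w) a := by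
  rw [eq_jw_im ha]
  rcases lt_trichotomy a.im 0 with hneg | hzero | hpos
  · rw [← niForm_star, ← neg_neg a.im, ← star_jw]
    exact (hG.posRealNear_niForm_jw_of_pos hG0 (neg_pos.mpr hneg) _ _).conj
  · rw [hzero, show jw 0 = 0 by simp [jw]]
    exact hG.posRealNear_niForm_zero hG0 v w
  · exact hG.posRealNear_niForm_jw_of_pos hG0 hpos v w

lemma IsNI.posRealNear_niForm_inv (hG : IsNI G) (hG0 : ¬ HasPole G 0) (w : Fin n → ℂ)
    (hv : 0 ≤ star v ⬝ᵥ (evalInf G).map Complex.ofReal *ᵥ v) :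
    PosRealNear (fun s => niForm G v w s⁻¹) 0 := by
  have hinv : Tendsto (fun s : ℂ => s⁻¹) (𝓝[≠] 0) (Bornology.cobounded ℂ) :=
    tendsto_inv₀_nhdsNE_zero
  have hnear := hinv.eventually (hG.eventually_niForm hG0 (Bornology.le_cofinite ℂ) v w)
  refine ⟨?_, ⟨(star v ⬝ᵥ (evalInf G).map Complex.ofReal *ᵥ v).re, (Complex.le_def.mp hv).1, ?_⟩,
    ?_⟩
  · filter_upwards [hnear, self_mem_nhdsWithin] with s hs hs0
    exact hs.1.comp s (differentiableAt_inv hs0)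
  · have hid : Tendsto (fun s : ℂ => s) (𝓝[≠] 0) (𝓝 0) := nhdsWithin_le_nhds
    have hform := tendsto_dotProduct_mulVec ((hid.smul_const (star w)).const_sub (star v))
      ((tendsto_evalM_cobounded hG.1).comp hinv) ((hid.smul_const w).const_add v)
    have hstatic := (hid.pow 2).mul_const (star w ⬝ᵥ evalM G 0 *ᵥ w)
    have hreal : (((star v ⬝ᵥ (evalInf G).map Complex.ofReal *ᵥ v).re : ℝ) : ℂ) =
        star v ⬝ᵥ (evalInf G).map Complex.ofReal *ᵥ v :=
      Complex.ext rfl (Complex.le_def.mp hv).2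
    have hsum := hform.add hstatic
    simp only [zero_smul, sub_zero, add_zero, ne_eq, OfNat.ofNat_ne_zero, not_false_eq_true,
      zero_pow, zero_mul] at hsum
    rw [hreal]
    refine hsum.congr' ?_
    filter_upwards [self_mem_nhdsWithin] with s (hs : s ≠ 0)
    have hleft : s⁻¹ • star v - star w = s⁻¹ • (star v - s • star w) := by
      rw [smul_sub, inv_smul_smul₀ hs]
    have hright : s⁻¹ • v + w = s⁻¹ • (v + s • w) := by
      rw [smul_add, inv_smul_smul₀ hs]
    simp only [niForm, hleft, hright, smul_dotProduct, mulVec_smul, dotProduct_smul, smul_eq_mul,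
      Function.comp_apply]
    field_simp
    ring
  · filter_upwards [hnear] with s hs hre
    exact hs.2 (by rw [Complex.inv_re, hre, zero_div])

theorem IsNI.re_niForm_nonneg (hG : IsNI G) (hG0 : ¬ HasPole G 0) (w : Fin n → ℂ)
    (hv : 0 ≤ star v ⬝ᵥ (evalInf G).map Complex.ofReal *ᵥ v) (hs : 0 < s.re) :
    0 ≤ (niForm G v w s).re := by
  refine re_nonneg_of_posRealNear (fun z hz => ?_)
    (fun a ha => hG.posRealNear_niForm hG0 v w ha) (hG.posRealNear_niForm_inv hG0 w hv) hs
  have hz0 : z ≠ 0 := by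
    rintro rfl
    simp at hz
  exact (differentiableAt_niForm (hG.2.1 z hz) hz0 v w).differentiableWithinAt

end PositiveRealForm

section RightHalfPlane

variable {G : Matrix (Fin n) (Fin n) (RatFunc ℝ)} {u : Fin n → ℂ} {s : ℂ} {γ : ℝ}

lemma niForm_sub_smul (hs : s ≠ 0) (u x : Fin n → ℂ) :
    niForm G (u - x) (s • x) s = s * (star u ⬝ᵥ evalM G s *ᵥ u) -
      ((2 * s.re : ℝ) : ℂ) * (star x ⬝ᵥ evalM G s *ᵥ u) + star s * (star x ⬝ᵥ evalM G 0 *ᵥ x) := by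
  have hleft : s • star (u - x) - star (s • x) = s • star u - ((2 * s.re : ℝ) : ℂ) • star x := by
    have : ((2 * s.re : ℝ) : ℂ) = s + star s := by simp [Complex.add_conj]
    rw [star_sub, star_smul, this]
    module
  have hright : s • (u - x) + s • x = s • u := by module
  rw [niForm, hleft, hright, star_smul]
  simp only [sub_dotProduct, smul_dotProduct, mulVec_smul, dotProduct_smul, smul_eq_mul]
  field_simp

lemma niForm_zero (u : Fin n → ℂ) (s : ℂ) :
    niForm G 0 u s = (star u ⬝ᵥ evalM G 0 *ᵥ u - star u ⬝ᵥ evalM G s *ᵥ u) / s := by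
  rw [niForm]
  simp only [star_zero, smul_zero, zero_sub, zero_add, neg_dotProduct]
  ring

-- The best choice of `x` in `niForm_sub_smul` is `G(0)⁻¹ G(s) u`; `γ⁻¹ G(s) u` is good enough.
theorem IsNI.re_div_mul_le_re_mul (hG : IsNI G) (hG0 : ¬ HasPole G 0)
    (hinf : (evalInf G).PosSemidef) (hγ : 0 < γ) (hle : ((γ : ℂ) • 1 - evalM G 0).PosSemidef)
    (hs : 0 < s.re) (u : Fin n → ℂ) :
    s.re / γ * (star (evalM G s *ᵥ u) ⬝ᵥ evalM G s *ᵥ u).re ≤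
      (s * (star u ⬝ᵥ evalM G s *ᵥ u)).re := by
  have hs0 : s ≠ 0 := by
    rintro rfl
    simp at hs
  set y := evalM G s *ᵥ u with hy
  have hform := hG.re_niForm_nonneg hG0 (s • ((γ : ℂ)⁻¹ • y))
    ((posSemidef_map_ofReal.mpr hinf).dotProduct_mulVec_nonneg (u - (γ : ℂ)⁻¹ • y)) hs
  have hstatic := (posSemidef_iff_re_nonneg hle.isHermitian).mp hle y
  have him : (star y ⬝ᵥ evalM G 0 *ᵥ y).im = 0 :=
    (hG.isHermitian_evalM_zero hG0).im_star_dotProduct_mulVec_self y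
  rw [niForm_sub_smul hs0, ← hy] at hform
  simp only [sub_mulVec, smul_mulVec, one_mulVec, dotProduct_sub, dotProduct_smul, smul_eq_mul,
    Complex.sub_re, Complex.re_ofReal_mul] at hstatic
  have hinv : (γ : ℂ)⁻¹ = ((γ⁻¹ : ℝ) : ℂ) := (Complex.ofReal_inv γ).symm
  simp only [hinv, star_smul, smul_dotProduct, mulVec_smul, dotProduct_smul, smul_eq_mul,
    Complex.star_def, Complex.conj_ofReal, Complex.add_re, Complex.sub_re, mul_assoc,
    Complex.re_ofReal_mul, Complex.mul_re (starRingEnd ℂ s), Complex.im_ofReal_mul, him,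
    Complex.conj_re, mul_zero, sub_zero] at hform
  have hscaled : 0 ≤ s.re * γ⁻¹ * γ⁻¹ *
      (γ * (star y ⬝ᵥ y).re - (star y ⬝ᵥ evalM G 0 *ᵥ y).re) := by positivity
  have hcancel : s.re * γ⁻¹ * γ⁻¹ * (γ * (star y ⬝ᵥ y).re) = s.re / γ * (star y ⬝ᵥ y).re := by
    field_simp
  rw [mul_sub, hcancel] at hscaled
  rw [div_eq_mul_inv] at hscaled ⊢
  linarith

theorem IsNI.re_evalInf_le_re_evalM_zero (hG : IsNI G) (hG0 : ¬ HasPole G 0) (u : Fin n → ℂ) :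
    (star u ⬝ᵥ (evalInf G).map Complex.ofReal *ᵥ u).re ≤ (star u ⬝ᵥ evalM G 0 *ᵥ u).re := by
  have hlim := (Complex.continuous_re.tendsto _).comp (tendsto_dotProduct_mulVec
    (tendsto_const_nhds (x := star u)) ((tendsto_evalM_cobounded hG.1).comp
      (RCLike.tendsto_ofReal_atTop_cobounded ℂ)) (tendsto_const_nhds (x := u)))
  refine le_of_tendsto hlim ?_
  filter_upwards [eventually_gt_atTop 0] with x hx
  have hform := hG.re_niForm_nonneg (v := 0) (s := x) hG0 u (by simp) hx
  rw [niForm_zero, Complex.div_ofReal_re, Complex.sub_re] at hform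
  exact sub_nonneg.mp (nonneg_of_mul_nonneg_left hform (inv_pos.mpr hx))

lemma IsSNI.re_niForm_zero_pos (hG : IsSNI G) (hu : u ≠ 0) (hs : 0 < s.re) :
    0 < (niForm G 0 u s).re := by
  have hG0 : ¬ HasPole G 0 := hG.1.not_hasPole le_rfl
  have hnonneg {z : ℂ} (hz : 0 < z.re) : 0 ≤ (niForm G 0 u z).re :=
    hG.isNI.re_niForm_nonneg hG0 u (by simp) hz
  have hdiff {z : ℂ} (hz : 0 ≤ z.re) (hz0 : z ≠ 0) : DifferentiableAt ℂ (niForm G 0 u) z :=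
    differentiableAt_niForm (hG.1.not_hasPole hz) hz0 0 u
  refine (hnonneg hs).lt_of_ne fun hzero => ?_
  have hconst : ∀ z ∈ {z : ℂ | 0 < z.re}, (niForm G 0 u z).re = 0 := by
    have := re_eqOn_of_isMinOn isPreconnected_re_pos isOpen_re_pos
      (fun z hz => (hdiff (le_of_lt hz) fun h => by simp [h] at hz).differentiableWithinAt) hs
      (fun z hz => show (niForm G 0 u s).re ≤ _ from hzero.symm.trans_le (hnonneg hz))
    exact fun z hz => (this z hz).trans hzero.symm
  have hpos : 0 < (niForm G 0 u (jw 1)).re := by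
    rw [re_niForm_jw (hG.isNI.isHermitian_evalM_zero hG0) one_ne_zero]
    simpa using hG.im_neg one_pos hu
  have hcont : ContinuousAt (fun z => (niForm G 0 u z).re) (jw 1) :=
    Complex.continuous_re.continuousAt.comp
      (hdiff (re_jw _).ge (jw_ne_zero one_ne_zero)).continuousAt
  have hfreq : ∃ᶠ z in 𝓝 (jw 1), 0 < z.re :=
    mem_closure_iff_frequently (s := {z : ℂ | 0 < z.re}).mp
      (by rw [Complex.closure_setOfPred_lt_re]; simp [jw])
  obtain ⟨z, hz, hz'⟩ := (hfreq.and_eventually (hcont.eventually_const_lt hpos)).exists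
  exact hz'.ne' (hconst z hz)

theorem IsSNI.re_star_mul_lt (hG : IsSNI G) (hu : u ≠ 0) (hs : 0 < s.re) :
    (star s * (star u ⬝ᵥ evalM G s *ᵥ u)).re < s.re * (star u ⬝ᵥ evalM G 0 *ᵥ u).re := by
  have hs0 : s ≠ 0 := by
    rintro rfl
    simp at hs
  have him : (star u ⬝ᵥ evalM G 0 *ᵥ u).im = 0 :=
    (hG.isNI.isHermitian_evalM_zero (hG.1.not_hasPole le_rfl)).im_star_dotProduct_mulVec_self u
  have hform := hG.re_niForm_zero_pos hu hs
  rw [niForm_zero, Complex.div_re, ← add_div,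
    div_pos_iff_of_pos_right (Complex.normSq_pos.mpr hs0)] at hform
  simp only [Complex.sub_re, Complex.sub_im, him] at hform
  simp only [Complex.star_def, Complex.mul_re, Complex.conj_re, Complex.conj_im]
  linarith

end RightHalfPlane

section FeedbackLoop

variable {P C : Matrix (Fin n) (Fin n) (RatFunc ℝ)} {l : Filter ℂ} {s : ℂ} {ω : ℝ}

lemma exists_eventually_norm_le_of_homogeneous {T V D : Type*} [TopologicalSpace T]
    [NormedAddCommGroup V] [NormedSpace ℝ V] [ProperSpace V] [NormedAddCommGroup D]
    [NormedSpace ℝ D] {Φ : T → V → D → ℝ}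
    (hΦ : Continuous fun p : (T × D) × V => Φ p.1.1 p.2 p.1.2)
    (hhom : ∀ t z d (c : ℝ), Φ t (c • z) (c • d) = c ^ 2 * Φ t z d) {t₀ : T}
    (hpos : ∀ z, z ≠ 0 → 0 < Φ t₀ z 0) :
    ∃ K : ℝ, ∀ᶠ t in 𝓝 t₀, ∀ z d, Φ t z d ≤ 0 → ‖z‖ ≤ K * ‖d‖ := by
  have hsphere : ∀ᶠ p : T × D in 𝓝 (t₀, 0), ∀ z ∈ Metric.sphere (0 : V) 1, 0 < Φ p.1 z p.2 := by
    refine (isCompact_sphere 0 1).eventually_forall_of_forall_eventually fun z hz => ?_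
    have : z ≠ 0 := ne_zero_of_mem_unit_sphere ⟨z, hz⟩
    exact (hΦ.tendsto ((t₀, 0), z)).eventually_const_lt (hpos z this)
  rw [nhds_prod_eq] at hsphere
  obtain ⟨p, hp, q, hq, hpq⟩ := eventually_prod_iff.mp hsphere
  obtain ⟨δ, hδ, hball⟩ := Metric.eventually_nhds_iff_ball.mp hq
  refine ⟨δ⁻¹, hp.mono fun t ht z d hle => ?_⟩
  by_contra! hlt
  have hz : 0 < ‖z‖ := (by positivity : (0 : ℝ) ≤ δ⁻¹ * ‖d‖).trans_lt hlt
  have hd : ‖z‖⁻¹ • d ∈ Metric.ball 0 δ := by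
    rw [mem_ball_zero_iff, norm_smul, norm_inv, norm_norm, inv_mul_lt_iff₀ hz]
    rwa [inv_mul_lt_iff₀ hδ, mul_comm] at hlt
  have hunit : ‖z‖⁻¹ • z ∈ Metric.sphere 0 1 := by
    rw [mem_sphere_zero_iff_norm, norm_smul, norm_inv, norm_norm, inv_mul_cancel₀ hz.ne']
  have := hpq ht (hball _ hd) _ hunit
  rw [hhom] at this
  exact this.not_ge (mul_nonpos_of_nonneg_of_nonpos (by positivity) hle)

/-- The closed loop `[P, C]` has uniformly bounded gain along the filter `l`: every solution `z` of
the loop equation `z = d + P (e + C z)` is controlled by the disturbances `d` and `e`. -/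
def LoopBounded (P C : Matrix (Fin n) (Fin n) (RatFunc ℝ)) (l : Filter ℂ) : Prop :=
  ∃ K : ℝ, ∀ᶠ s in l, ∀ z d e : Fin n → ℂ,
    z = d + evalM P s *ᵥ (e + evalM C s *ᵥ z) → ‖z‖ ≤ K * ‖(d, e)‖

lemma loopBounded_of_tendsto {A B : Matrix (Fin n) (Fin n) ℂ} (hP : Tendsto (evalM P) l (𝓝 A))
    (hC : Tendsto (evalM C) l (𝓝 B)) (hinj : ∀ z, z = A *ᵥ B *ᵥ z → z = 0) :
    LoopBounded P C l := by
  let Φ (M : Matrix (Fin n) (Fin n) ℂ × Matrix (Fin n) (Fin n) ℂ) (z : Fin n → ℂ)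
      (f : (Fin n → ℂ) × (Fin n → ℂ)) : ℝ := ‖z - f.1 - M.1 *ᵥ (f.2 + M.2 *ᵥ z)‖ ^ 2
  obtain ⟨K, hK⟩ := exists_eventually_norm_le_of_homogeneous (Φ := Φ) (t₀ := (A, B))
    (by fun_prop)
    (fun M z f c => by
      simp only [Φ, Prod.smul_fst, Prod.smul_snd, mulVec_smul, ← smul_add, ← smul_sub, norm_smul,
        mul_pow, Real.norm_eq_abs, sq_abs])
    (fun z hz => by
      have : z - A *ᵥ B *ᵥ z ≠ 0 := fun h => hz (hinj z (sub_eq_zero.mp h))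
      simpa only [Φ, Prod.fst_zero, Prod.snd_zero, sub_zero, zero_add] using
        pow_pos (norm_pos_iff.mpr this) 2)
  refine ⟨K, ((hP.prodMk_nhds hC).eventually hK).mono fun s hs z d e hz => hs z (d, e) ?_⟩
  simp only [Φ]
  rw [sub_sub, ← hz, sub_self]
  simp

lemma loopBounded_nhdsNE (hP : ¬ HasPole P s) (hC : ¬ HasPole C s)
    (hinj : ∀ z, z = evalM P s *ᵥ evalM C s *ᵥ z → z = 0) : LoopBounded P C (𝓝[≠] s) :=
  loopBounded_of_tendsto ((continuousAt_evalM hP).tendsto.mono_left nhdsWithin_le_nhds)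
    ((continuousAt_evalM hC).tendsto.mono_left nhdsWithin_le_nhds) hinj

lemma IsNI.loopBounded_jw (hP : IsNI P) (hC : IsSNI C) (hω : 0 < ω) :
    LoopBounded P C (map jw (𝓝[≠] ω)) := by
  let Φ (M : Matrix (Fin n) (Fin n) ℂ) (z : Fin n → ℂ) (f : (Fin n → ℂ) × (Fin n → ℂ)) : ℝ :=
    (star (f.2 + M *ᵥ z) ⬝ᵥ (z - f.1)).im
  obtain ⟨K, hK⟩ := exists_eventually_norm_le_of_homogeneous (Φ := Φ) (t₀ := evalM C (jw ω))
    (by fun_prop)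
    (fun M z f c => by
      simp only [Φ, Prod.smul_fst, Prod.smul_snd, mulVec_smul, ← smul_add, ← smul_sub, star_smul,
        smul_dotProduct, dotProduct_smul, star_trivial, Complex.smul_im, smul_eq_mul]
      ring)
    (fun z hz => by
      simp only [Φ, Prod.fst_zero, Prod.snd_zero, sub_zero, zero_add]
      rw [star_dotProduct, Complex.star_def, Complex.conj_im]
      exact neg_pos.mpr (hC.im_neg hω hz))
  refine ⟨K, eventually_map.mpr ?_⟩
  have hpole := (tendsto_jw_nhdsNE ω).eventually (eventually_not_hasPole (nhdsNE_le_cofinite _) P)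
  have hClim := ((continuousAt_evalM (hC.1.not_hasPole (re_jw _).ge)).tendsto.mono_left
    nhdsWithin_le_nhds).comp (tendsto_jw_nhdsNE ω)
  filter_upwards [hClim.eventually hK, hpole, nhdsWithin_le_nhds (lt_mem_nhds hω)]
    with ω' hle hpole hω' z d e hz
  refine hle z (d, e) ?_
  have : z - d = evalM P (jw ω') *ᵥ (e + evalM C (jw ω') *ᵥ z) := sub_eq_of_eq_add' hz
  simpa only [Φ, Function.comp_apply, this] using hP.im_nonpos hω' hpole _

end FeedbackLoop

section Sufficiency

variable {P C : Matrix (Fin n) (Fin n) (RatFunc ℝ)} {l : Filter ℂ} {s : ℂ} {γ : ℝ}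
  {z : Fin n → ℂ}

lemma isBigO_evalC_of_tendsto {G : Matrix (Fin n) (Fin n) (RatFunc ℝ)}
    {A : Matrix (Fin n) (Fin n) ℂ} (hG : Tendsto (evalM G) l (𝓝 A)) (i j : Fin n) :
    evalC (G i j) =O[l] (1 : ℂ → ℂ) :=
  (tendsto_pi_nhds.mp (tendsto_pi_nhds.mp hG i) j).isBigO_one ℂ

lemma isBigO_evalC_mul {G H : Matrix (Fin n) (Fin n) (RatFunc ℝ)} (hl : l ≤ cofinite)
    (hG : ∀ i j, evalC (G i j) =O[l] (1 : ℂ → ℂ)) (hH : ∀ i j, evalC (H i j) =O[l] (1 : ℂ → ℂ))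
    (i j : Fin n) : evalC ((G * H) i j) =O[l] (1 : ℂ → ℂ) := by
  have hsum : (fun s => ∑ k, evalC (G i k) s * evalC (H k j) s) =O[l] (1 : ℂ → ℂ) :=
    .fun_sum fun k _ => ((hG i k).mul (hH k j)).congr_right fun _ => mul_one 1
  refine hsum.congr' ?_ .rfl
  filter_upwards [eventually_not_hasPole hl G, eventually_not_hasPole hl H] with s hGs hHs
  exact (congr_fun₂ (evalM_mul hGs hHs) i j).symm

lemma memRHinf_of_isBigO {m : Type*} [Fintype m] {G : Matrix m m (RatFunc ℝ)}
    (hinf : ∀ i j, evalC (G i j) =O[Bornology.cobounded ℂ] (1 : ℂ → ℂ))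
    (hG : ∀ s : ℂ, 0 ≤ s.re → 0 ≤ s.im → ∃ l : Filter ℂ, l.NeBot ∧ l ≤ 𝓝[≠] s ∧
      ∀ i j, evalC (G i j) =O[l] (1 : ℂ → ℂ)) : MemRHinf G := by
  have hupper (s : ℂ) (hre : 0 ≤ s.re) (him : 0 ≤ s.im) (i j : m) : ¬ IsPoleAt (G i j) s := by
    obtain ⟨l, _, hl, hbdd⟩ := hG s hre him
    exact mem_regularAt_of_isBigO_one hl (hbdd i j)
  refine ⟨fun i j => degree_num_le_of_isBigO_one (hinf i j), fun s hs i j => ?_⟩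
  rcases le_total 0 s.im with him | him
  · exact hupper s hs him i j
  · rw [← isPoleAt_star]
    exact hupper (star s) (by simpa using hs) (by simpa using him) i j

lemma LoopBounded.det_ne_zero [l.NeBot] (hl : l ≤ cofinite) (hloop : LoopBounded P C l) :
    (1 - P * C).det ≠ 0 := by
  obtain ⟨K, hK⟩ := hloop
  obtain ⟨s, hP, hC, hs⟩ := ((eventually_not_hasPole hl P).and
    ((eventually_not_hasPole hl C).and hK)).exists
  intro hdet
  have hPC := not_hasPole_mul hP hC
  have hdet' : (1 - evalM P s * evalM C s).det = 0 := by
    rw [← evalM_mul hP hC, ← evalM_one_sub hPC, ← evalC_det (not_hasPole_one_sub hPC), hdet]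
    simp [evalC]
  obtain ⟨z, hz, hker⟩ := exists_mulVec_eq_zero_iff.mpr hdet'
  rw [sub_mulVec, one_mulVec, ← mulVec_mulVec, sub_eq_zero] at hker
  have := hs z 0 0 (by rw [zero_add, zero_add, ← hker])
  exact hz (norm_le_zero_iff.mp (by simpa using this))

lemma LoopBounded.isBigO_of_eventually_eq (hloop : LoopBounded P C l)
    {G : Matrix (Fin n) (Fin n) (RatFunc ℝ)} {D E : Matrix (Fin n) (Fin n) ℂ}
    (hG : ∀ᶠ s in l, evalM G s = D + evalM P s * (E + evalM C s * evalM G s)) (i j : Fin n) :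
    evalC (G i j) =O[l] (1 : ℂ → ℂ) := by
  obtain ⟨K, hK⟩ := hloop
  refine .of_bound (K * ‖(D.col j, E.col j)‖) ?_
  filter_upwards [hK, hG] with s hs hGs
  rw [Pi.one_apply, norm_one, mul_one]
  refine (norm_le_pi_norm ((evalM G s).col j) i).trans (hs _ _ _ ?_)
  have := congrArg (· *ᵥ Pi.single j 1) hGs
  rwa [add_mulVec, ← mulVec_mulVec, add_mulVec, ← mulVec_mulVec, mulVec_single_one,
    mulVec_single_one, mulVec_single_one] at this

lemma LoopBounded.isBigO_fromBlocks (hloop : LoopBounded P C l) (hl : l ≤ cofinite)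
    (hdet : (1 - P * C).det ≠ 0) (hC : ∀ i j, evalC (C i j) =O[l] (1 : ℂ → ℂ))
    (i j : Fin n ⊕ Fin n) :
    evalC (fromBlocks (1 - P * C)⁻¹ ((1 - P * C)⁻¹ * P) (C * (1 - P * C)⁻¹)
      (C * (1 - P * C)⁻¹ * P) i j) =O[l] (1 : ℂ → ℂ) := by
  set W := (1 - P * C)⁻¹
  have hinv : (1 - P * C) * W = 1 := mul_nonsing_inv _ hdet.isUnit
  have heval : ∀ᶠ s in l, ¬ HasPole P s ∧ ¬ HasPole W s ∧
      evalM W s = 1 + evalM P s * (0 + evalM C s * evalM W s) := by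
    filter_upwards [eventually_not_hasPole hl P, eventually_not_hasPole hl C,
      eventually_not_hasPole hl W] with s hP hC hW
    have hPC := not_hasPole_mul hP hC
    have := congrArg (evalM · s) hinv
    rw [evalM_mul (not_hasPole_one_sub hPC) hW, evalM_one_sub hPC, evalM_mul hP hC, evalM_one,
      sub_mul, one_mul, sub_eq_iff_eq_add, mul_assoc] at this
    exact ⟨hP, hW, by rwa [zero_add]⟩
  have hWbdd := hloop.isBigO_of_eventually_eq (heval.mono fun s hs => hs.2.2)
  have hWPbdd := hloop.isBigO_of_eventually_eq (G := W * P) (D := 0) (E := 1) <| by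
    filter_upwards [heval] with s ⟨hP, hW, hs⟩
    rw [evalM_mul hW hP]
    nth_rewrite 1 [hs]
    noncomm_ring
  rcases i with i | i <;> rcases j with j | j
  · exact hWbdd i j
  · exact hWPbdd i j
  · exact isBigO_evalC_mul hl hC hWbdd i j
  · rw [fromBlocks_apply₂₂, mul_assoc]
    exact isBigO_evalC_mul hl hC hWPbdd i j

theorem feedbackStable_of_loopBounded (hC : MemRHinf C)
    (hinf : LoopBounded P C (Bornology.cobounded ℂ))
    (hloop : ∀ s : ℂ, 0 ≤ s.re → 0 ≤ s.im → ∃ l : Filter ℂ, l.NeBot ∧ l ≤ 𝓝[≠] s ∧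
      LoopBounded P C l) : FeedbackStable P C := by
  have hdet := hinf.det_ne_zero (Bornology.le_cofinite ℂ)
  refine ⟨hdet, memRHinf_of_isBigO (hinf.isBigO_fromBlocks (Bornology.le_cofinite ℂ) hdet
    (isBigO_evalC_of_tendsto (tendsto_evalM_cobounded hC.1))) fun s hre him => ?_⟩
  obtain ⟨l, hne, hl, hbdd⟩ := hloop s hre him
  have hClim := (continuousAt_evalM (hC.not_hasPole hre)).tendsto.mono_left
    (hl.trans nhdsWithin_le_nhds)
  exact ⟨l, hne, hl, hbdd.isBigO_fromBlocks (hl.trans (nhdsNE_le_cofinite s)) hdet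
    (isBigO_evalC_of_tendsto hClim)⟩

lemma star_dotProduct_smul_one_sub_mulVec_add {A : Matrix (Fin n) (Fin n) ℂ}
    (hA : A.IsHermitian) (y : Fin n → ℂ) :
    star (A *ᵥ y) ⬝ᵥ ((γ : ℂ) • 1 - A) *ᵥ (A *ᵥ y) +
        star ((γ : ℂ) • y - A *ᵥ y) ⬝ᵥ A *ᵥ ((γ : ℂ) • y - A *ᵥ y) =
      γ * (γ * (star (A *ᵥ y) ⬝ᵥ y) - star (A *ᵥ y) ⬝ᵥ A *ᵥ y) := by
  have hmove (x : Fin n → ℂ) : star y ⬝ᵥ A *ᵥ x = star (A *ᵥ y) ⬝ᵥ x := by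
    rw [star_mulVec, hA.eq, dotProduct_mulVec]
  simp only [sub_mulVec, smul_mulVec, one_mulVec, mulVec_sub, mulVec_smul, star_sub, star_smul,
    sub_dotProduct, dotProduct_sub, smul_dotProduct, dotProduct_smul, smul_eq_mul, hmove,
    Complex.star_def, Complex.conj_ofReal]
  ring

lemma eq_zero_of_eq_mulVec_mulVec {A B : Matrix (Fin n) (Fin n) ℂ} (hγ : 0 < γ)
    (hA : A.PosSemidef) (hγA : ((γ : ℂ) • 1 - A).PosDef)
    (hB : ∀ z, (star z ⬝ᵥ B *ᵥ z).re ≤ γ⁻¹ * (star z ⬝ᵥ z).re) (hz : z = A *ᵥ B *ᵥ z) :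
    z = 0 := by
  by_contra hz0
  set y := B *ᵥ z with hy
  have hsplit := star_dotProduct_smul_one_sub_mulVec_add (γ := γ) hA.isHermitian y
  rw [← hz] at hsplit
  have hpos := (posDef_iff_re_pos hγA.isHermitian).mp hγA z hz0
  have hnonneg := (posSemidef_iff_re_nonneg hA.isHermitian).mp hA ((γ : ℂ) • y - z)
  have hre := congrArg Complex.re hsplit
  have hBz := hB z
  rw [← hy, ← div_eq_inv_mul, le_div_iff₀' hγ] at hBz
  rw [Complex.add_re, Complex.re_ofReal_mul, Complex.sub_re, Complex.re_ofReal_mul] at hre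
  nlinarith

lemma IsNI.eq_zero_of_eq_mulVec_mulVec (hP : IsNI P) (hP0 : ¬ HasPole P 0)
    (hPinf : (evalInf P).PosSemidef) (hγ : 0 < γ) (hPγ : ((γ : ℂ) • 1 - evalM P 0).PosSemidef)
    (hC : IsSNI C) (hCγ : ∀ z, (star z ⬝ᵥ evalM C 0 *ᵥ z).re ≤ γ⁻¹ * (star z ⬝ᵥ z).re)
    (hs : 0 < s.re) (hz : z = evalM P s *ᵥ evalM C s *ᵥ z) : z = 0 := by
  by_contra hz0
  have hplant := hP.re_div_mul_le_re_mul hP0 hPinf hγ hPγ hs (evalM C s *ᵥ z)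
  rw [← hz] at hplant
  have hctrl := hC.re_star_mul_lt hz0 hs
  have hstatic := mul_le_mul_of_nonneg_left (hCγ z) hs.le
  have hswap : (s * (star (evalM C s *ᵥ z) ⬝ᵥ z)).re =
      (star s * (star z ⬝ᵥ evalM C s *ᵥ z)).re := by
    rw [star_dotProduct, ← Complex.conj_re (s * _), map_mul]
    simp
  rw [hswap, div_eq_mul_inv, mul_assoc] at hplant
  linarith

theorem IsSNI.feedbackStable (hC : IsSNI C) (hγ : 0 < γ)
    (hCγ : LoewnerLE (evalR C 0) (γ⁻¹ • 1)) (hP : IsNI P) (hP0 : ¬ HasPole P 0)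
    (hPinf : (evalInf P).PosSemidef) (hPγ : LoewnerLT (evalR P 0) (γ • 1)) :
    FeedbackStable P C := by
  have hC0 : ¬ HasPole C 0 := hC.1.not_hasPole le_rfl
  have hCle := (posSemidef_smul_one_sub_iff (hC.isNI.isHermitian_evalM_zero hC0)).mp
    (loewnerLE_smul_one_iff.mp hCγ)
  have hPγ' := loewnerLT_smul_one_iff.mp hPγ
  have hPinf' := posSemidef_map_ofReal.mpr hPinf
  have hPle := hP.re_evalInf_le_re_evalM_zero hP0
  refine feedbackStable_of_loopBounded hC.1 ?_ fun s hre him => ?_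
  · refine loopBounded_of_tendsto (tendsto_evalM_cobounded hP.1) (tendsto_evalM_cobounded hC.1.1)
      fun z => eq_zero_of_eq_mulVec_mulVec hγ hPinf' ?_
      fun z => (hC.isNI.re_evalInf_le_re_evalM_zero hC0 z).trans (hCle z)
    have hherm := (isHermitian_one.smul (Complex.conj_ofReal γ)).sub hPinf'.isHermitian
    refine (posDef_iff_re_pos hherm).mpr fun u hu => ?_
    refine ((posDef_iff_re_pos hPγ'.isHermitian).mp hPγ' u hu).trans_le ?_
    simp only [sub_mulVec, dotProduct_sub, Complex.sub_re]
    exact sub_le_sub_left (hPle u) _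
  rcases hre.eq_or_lt with hre | hre
  · rcases him.eq_or_lt with him | him
    · obtain rfl : s = 0 := Complex.ext hre.symm him.symm
      have hPpsd := (posSemidef_iff_re_nonneg (hP.isHermitian_evalM_zero hP0)).mpr fun u =>
        ((posSemidef_iff_re_nonneg hPinf'.isHermitian).mp hPinf' u).trans (hPle u)
      exact ⟨_, inferInstance, le_rfl, loopBounded_nhdsNE hP0 hC0 fun z =>
        eq_zero_of_eq_mulVec_mulVec hγ hPpsd hPγ' hCle⟩
    · rw [eq_jw_im hre.symm]
      exact ⟨_, inferInstance, tendsto_jw_nhdsNE _, hP.loopBounded_jw hC him⟩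
  · exact ⟨_, inferInstance, le_rfl, loopBounded_nhdsNE (hP.2.1 s hre) (hC.1.not_hasPole hre.le)
      fun z => hP.eq_zero_of_eq_mulVec_mulVec hP0 hPinf hγ hPγ'.posSemidef hC hCle hre⟩

end Sufficiency

section TestPlants

variable {d q a ω ν : ℝ} {s : ℂ}

/-- The characteristic polynomial `s² + d s + q` of a vibration mode with damping `d` and
stiffness `q`, as a rational function. -/
def modePoly (d q : ℝ) : RatFunc ℝ := RatFunc.X ^ 2 + RatFunc.C d * RatFunc.X + RatFunc.C q

lemma modePoly_mem_regularAt (d q : ℝ) (s : ℂ) : modePoly d q ∈ regularAt s :=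
  add_mem (add_mem (pow_mem (X_mem_regularAt s) 2)
    (mul_mem (C_mem_regularAt d s) (X_mem_regularAt s))) (C_mem_regularAt q s)

lemma evalC_modePoly (d q : ℝ) (s : ℂ) : evalC (modePoly d q) s = s ^ 2 + d * s + q := by
  have hX := X_mem_regularAt s
  have hdX := mul_mem (C_mem_regularAt d s) hX
  rw [modePoly, sq, evalC_add (add_mem (mul_mem hX hX) hdX) (C_mem_regularAt q s),
    evalC_add (mul_mem hX hX) hdX, evalC_mul hX hX, evalC_mul (C_mem_regularAt d s) hX,
    evalC_X, evalC_C, evalC_C, sq]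

lemma sq_add_mul_add_ne_zero (hq : 0 < q) (hs : 0 ≤ s.re) (hpos : 0 < d + s.re) :
    s ^ 2 + d * s + q ≠ 0 := by
  intro hzero
  have hs0 : s ≠ 0 := by
    rintro rfl
    simp [hq.ne'] at hzero
  have hre : ((s ^ 2 + d * s + q) * star s).re = (d + s.re) * Complex.normSq s + q * s.re := by
    simp only [sq, RCLike.star_def, Complex.mul_re, Complex.mul_im, Complex.add_re, Complex.add_im,
      Complex.ofReal_re, Complex.ofReal_im, Complex.conj_re, Complex.conj_im, Complex.normSq_apply]
    ring
  rw [hzero, zero_mul, Complex.zero_re] at hre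
  have := mul_pos hpos (Complex.normSq_pos.mpr hs0)
  have := mul_nonneg hq.le hs
  linarith

lemma eventually_sq_add_mul_add_ne_zero (d q : ℝ) :
    ∀ᶠ s : ℂ in cofinite, s ^ 2 + d * s + q ≠ 0 := by
  have hmonic : (X ^ 2 + C (d : ℂ) * X + C (q : ℂ) : ℂ[X]).Monic := by monicity!
  simpa using (Polynomial.finite_setOfPred_isRoot hmonic.ne_zero).eventually_cofinite_notMem

lemma modePoly_ne_zero (d q : ℝ) : modePoly d q ≠ 0 := by
  obtain ⟨s, hs⟩ := (eventually_sq_add_mul_add_ne_zero d q).exists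
  intro hzero
  rw [← evalC_modePoly, hzero, ← RatFunc.C.map_zero, evalC_C] at hs
  exact hs Complex.ofReal_zero

lemma evalC_inv_modePoly (hs : s ^ 2 + d * s + q ≠ 0) :
    evalC (modePoly d q)⁻¹ s = (s ^ 2 + d * s + q)⁻¹ := by
  rw [evalC_inv (modePoly_mem_regularAt d q s) (evalC_modePoly d q s ▸ hs), evalC_modePoly]

lemma inv_modePoly_mem_regularAt (hs : s ^ 2 + d * s + q ≠ 0) :
    (modePoly d q)⁻¹ ∈ regularAt s :=
  inv_mem_regularAt (evalC_modePoly d q s ▸ hs)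

lemma tendsto_mul_inv_modePoly (d q : ℝ) :
    Tendsto (fun s => s * evalC (modePoly d q)⁻¹ s) (Bornology.cobounded ℂ) (𝓝 0) := by
  have hinv : Tendsto (fun s : ℂ => s⁻¹) (Bornology.cobounded ℂ) (𝓝 0) := tendsto_inv₀_cobounded
  have hfactor : Tendsto (fun s : ℂ => 1 + d * s⁻¹ + q * s⁻¹ ^ 2) (Bornology.cobounded ℂ)
      (𝓝 1) := by
    simpa using ((hinv.const_mul (d : ℂ)).const_add 1).add ((hinv.pow 2).const_mul (q : ℂ))
  have hlim := hinv.mul (hfactor.inv₀ one_ne_zero)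
  rw [zero_mul] at hlim
  refine hlim.congr' ?_
  filter_upwards [hfactor.eventually_ne one_ne_zero,
    Bornology.le_cofinite ℂ (eventually_cofinite_ne 0)] with s hs hs0
  have hsplit : s ^ 2 + d * s + q = s ^ 2 * (1 + d * s⁻¹ + q * s⁻¹ ^ 2) := by field_simp
  rw [evalC_inv_modePoly (hsplit ▸ mul_ne_zero (pow_ne_zero 2 hs0) hs), hsplit]
  field_simp

lemma tendsto_inv_modePoly (d q : ℝ) :
    Tendsto (evalC (modePoly d q)⁻¹) (Bornology.cobounded ℂ) (𝓝 0) := by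
  have h := (tendsto_inv₀_cobounded (α := ℂ)).mul (tendsto_mul_inv_modePoly d q)
  rw [zero_mul] at h
  refine h.congr' ?_
  filter_upwards [Bornology.le_cofinite ℂ (eventually_cofinite_ne 0)] with s hs
  exact inv_mul_cancel_left₀ hs _

/-- `g` is a stable scalar negative imaginary function with instantaneous gain `a`. -/
structure IsStableNIGain (g : RatFunc ℝ) (a : ℝ) : Prop where
  mem_regularAt : ∀ s : ℂ, 0 ≤ s.re → g ∈ regularAt s
  tendsto : Tendsto (evalC g) (Bornology.cobounded ℂ) (𝓝 a)
  im_nonpos : ∀ ω : ℝ, 0 < ω → (evalC g (jw ω)).im ≤ 0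

lemma isStableNIGain_C (a : ℝ) : IsStableNIGain (RatFunc.C a) a where
  mem_regularAt s _ := C_mem_regularAt a s
  tendsto := tendsto_const_nhds.congr fun s => (evalC_C a s).symm
  im_nonpos ω _ := by simp [evalC_C]

lemma proper_of_tendsto {G : Matrix (Fin n) (Fin n) (RatFunc ℝ)} {M : Matrix (Fin n) (Fin n) ℂ}
    (hG : Tendsto (evalM G) (Bornology.cobounded ℂ) (𝓝 M)) : Proper G :=
  fun i j => degree_num_le_of_isBigO_one (isBigO_evalC_of_tendsto hG i j)

lemma evalInf_eq_of_tendsto {G : Matrix (Fin n) (Fin n) (RatFunc ℝ)}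
    {D : Matrix (Fin n) (Fin n) ℝ}
    (hG : Tendsto (evalM G) (Bornology.cobounded ℂ) (𝓝 (D.map Complex.ofReal))) :
    evalInf G = D :=
  Matrix.map_injective Complex.ofReal_injective
    (tendsto_nhds_unique (tendsto_evalM_cobounded (proper_of_tendsto hG)) hG)

/-- The test plant `g I + (A + s B) / (s² + ν²)`: a scalar gain `g` in parallel with an undamped
vibration mode of frequency `ν`. -/
def oscillator (g : RatFunc ℝ) (A B : Matrix (Fin n) (Fin n) ℝ) (ν : ℝ) :
    Matrix (Fin n) (Fin n) (RatFunc ℝ) :=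
  g • 1 + (modePoly 0 (ν ^ 2))⁻¹ • (A.map RatFunc.C + (RatFunc.X : RatFunc ℝ) • B.map RatFunc.C)

variable {g : RatFunc ℝ} {A B : Matrix (Fin n) (Fin n) ℝ}

lemma not_hasPole_oscillator (hg : g ∈ regularAt s) (hs : s ^ 2 + ν ^ 2 ≠ 0) :
    ¬ HasPole (oscillator g A B ν) s := by
  have hs' : s ^ 2 + (0 : ℝ) * s + (ν ^ 2 : ℝ) ≠ 0 := by simpa using hs
  exact not_hasPole_add (not_hasPole_smul hg (not_hasPole_one s))
    (not_hasPole_smul (inv_modePoly_mem_regularAt hs')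
      (not_hasPole_add (not_hasPole_map_C A s)
        (not_hasPole_smul (X_mem_regularAt s) (not_hasPole_map_C B s))))

lemma evalM_oscillator (hg : g ∈ regularAt s) (hs : s ^ 2 + ν ^ 2 ≠ 0) :
    evalM (oscillator g A B ν) s = evalC g s • 1 +
      (s ^ 2 + ν ^ 2)⁻¹ • (A.map Complex.ofReal + s • B.map Complex.ofReal) := by
  have hs' : s ^ 2 + (0 : ℝ) * s + (ν ^ 2 : ℝ) ≠ 0 := by simpa using hs
  have hsB := not_hasPole_smul (X_mem_regularAt s) (not_hasPole_map_C B s)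
  have hAB := not_hasPole_add (not_hasPole_map_C A s) hsB
  have hinv := inv_modePoly_mem_regularAt hs'
  rw [oscillator, evalM_add (not_hasPole_smul hg (not_hasPole_one s)) (not_hasPole_smul hinv hAB),
    evalM_smul hg (not_hasPole_one s), evalM_one, evalM_smul hinv hAB,
    evalM_add (not_hasPole_map_C A s) hsB, evalM_smul (X_mem_regularAt s) (not_hasPole_map_C B s),
    evalM_map_C, evalM_map_C, evalC_X, evalC_inv_modePoly hs', Complex.ofReal_zero, zero_mul,
    add_zero, Complex.ofReal_pow]

lemma tendsto_evalM_oscillator (hg : IsStableNIGain g a) (A B : Matrix (Fin n) (Fin n) ℝ)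
    (ν : ℝ) : Tendsto (evalM (oscillator g A B ν)) (Bornology.cobounded ℂ)
      (𝓝 ((a • 1 : Matrix (Fin n) (Fin n) ℝ).map Complex.ofReal)) := by
  have hA := (tendsto_inv_modePoly 0 (ν ^ 2)).smul_const (A.map Complex.ofReal)
  have hB := (tendsto_mul_inv_modePoly 0 (ν ^ 2)).smul_const (B.map Complex.ofReal)
  have hlim := (hg.tendsto.smul_const (1 : Matrix (Fin n) (Fin n) ℂ)).add (hA.add hB)
  rw [zero_smul, zero_smul, add_zero, add_zero] at hlim
  rw [map_ofReal_smul_one]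
  refine hlim.congr' ?_
  filter_upwards [eventually_mem_regularAt (Bornology.le_cofinite ℂ) g,
    Bornology.le_cofinite ℂ (eventually_sq_add_mul_add_ne_zero 0 (ν ^ 2))] with s hgs hs
  have hs' : s ^ 2 + ν ^ 2 ≠ 0 := by simpa using hs
  rw [evalM_oscillator hgs hs', evalC_inv_modePoly hs, Complex.ofReal_zero, zero_mul, add_zero,
    Complex.ofReal_pow, smul_add, smul_smul, mul_comm s]

lemma isHermitian_map_add_jw_smul_map (hν : ν ≠ 0)
    (hAB : (A.map Complex.ofReal + jw ν • B.map Complex.ofReal).IsHermitian) (ω : ℝ) :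
    (A.map Complex.ofReal + jw ω • B.map Complex.ofReal).IsHermitian := by
  refine IsHermitian.ext fun i j => ?_
  have hA : A j i = A i j := by simpa [jw] using congrArg Complex.re (hAB.apply i j)
  have hB : B j i = -B i j := by
    have him : -(ν * B j i) = ν * B i j := by
      simpa [jw] using congrArg Complex.im (hAB.apply i j)
    exact mul_left_cancel₀ hν (by linarith)
  simp [jw, hA, hB]

lemma sq_add_sq_ne_zero_of_re_pos (hν : 0 < ν) (hs : 0 < s.re) : s ^ 2 + ν ^ 2 ≠ 0 := by
  simpa using sq_add_mul_add_ne_zero (d := 0) (pow_pos hν 2) hs.le (by simpa using hs)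

lemma jw_sq_add_sq (ω ν : ℝ) : jw ω ^ 2 + ν ^ 2 = ((ν ^ 2 - ω ^ 2 : ℝ) : ℂ) := by
  simp [jw, mul_pow, sub_eq_neg_add]

lemma jw_sq_add_sq_ne_zero (hω : 0 < ω) (hν : 0 < ν) (hne : ω ≠ ν) : jw ω ^ 2 + ν ^ 2 ≠ 0 := by
  rw [jw_sq_add_sq, Complex.ofReal_ne_zero, sub_ne_zero]
  exact fun h => hne ((pow_left_inj₀ hω.le hν.le two_ne_zero).mp h.symm)

lemma im_star_dotProduct_evalM_oscillator_nonpos (hg : IsStableNIGain g a) (hν : 0 < ν)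
    (hAB : (A.map Complex.ofReal + jw ν • B.map Complex.ofReal).IsHermitian) (hω : 0 < ω)
    (hne : ω ≠ ν) (u : Fin n → ℂ) :
    (star u ⬝ᵥ evalM (oscillator g A B ν) (jw ω) *ᵥ u).im ≤ 0 := by
  have hherm := isHermitian_map_add_jw_smul_map hν.ne' hAB ω
  have hmode : (star u ⬝ᵥ (A.map Complex.ofReal + jw ω • B.map Complex.ofReal) *ᵥ u).im = 0 :=
    hherm.im_star_dotProduct_mulVec_self u
  have hu : 0 ≤ star u ⬝ᵥ u := dotProduct_star_self_nonneg u
  rw [evalM_oscillator (hg.mem_regularAt _ (re_jw _).ge) (jw_sq_add_sq_ne_zero hω hν hne),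
    jw_sq_add_sq, add_mulVec, smul_mulVec, smul_mulVec, one_mulVec, dotProduct_add,
    dotProduct_smul, dotProduct_smul, ← Complex.ofReal_inv, smul_eq_mul, smul_eq_mul,
    Complex.add_im, Complex.im_ofReal_mul, hmode, mul_zero, add_zero, Complex.mul_im,
    ← (Complex.le_def.mp hu).2, Complex.zero_im, mul_zero, zero_add]
  exact mul_nonpos_of_nonpos_of_nonneg (hg.im_nonpos ω hω) (Complex.le_def.mp hu).1

lemma tendsto_residue_oscillator (hg : g ∈ regularAt (jw ν)) (hν : 0 < ν)
    (A B : Matrix (Fin n) (Fin n) ℝ) :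
    Tendsto (fun s : ℂ => (s - jw ν) • Complex.I • evalM (oscillator g A B ν) s) (𝓝[≠] jw ν)
      (𝓝 (((2 * ν)⁻¹ : ℝ) • (A.map Complex.ofReal + jw ν • B.map Complex.ofReal))) := by
  have hsum : jw ν + jw ν ≠ 0 := by simpa using jw_ne_zero hν.ne'
  have hlim : ContinuousAt (fun s => ((s - jw ν) * Complex.I * evalC g s) •
      (1 : Matrix (Fin n) (Fin n) ℂ) + (Complex.I * (s + jw ν)⁻¹) •
        (A.map Complex.ofReal + s • B.map Complex.ofReal)) (jw ν) := by
    have := (differentiableAt_evalC hg).continuousAt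
    fun_prop (disch := assumption)
  have hvalue : Complex.I * (jw ν + jw ν)⁻¹ = ((2 * ν)⁻¹ : ℝ) := by
    have := Complex.ofReal_ne_zero.mpr hν.ne'
    simp only [jw]
    push_cast
    field_simp
    norm_num
  have hlim' := hlim.tendsto.mono_left (nhdsWithin_le_nhds (s := {jw ν}ᶜ))
  rw [sub_self, zero_mul, zero_mul, zero_smul, zero_add, hvalue] at hlim'
  refine hlim'.congr' ?_
  filter_upwards [eventually_mem_regularAt (nhdsNE_le_cofinite _) g,
    nhdsNE_le_cofinite _ (eventually_cofinite_ne (-jw ν)), self_mem_nhdsWithin] with s hgs hs hs'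
  have hsub : s - jw ν ≠ 0 := sub_ne_zero.mpr hs'
  have hadd : s + jw ν ≠ 0 := fun h => hs (eq_neg_of_add_eq_zero_left h)
  have hfactor : s ^ 2 + ν ^ 2 = (s - jw ν) * (s + jw ν) := by
    simp only [jw]
    linear_combination (ν : ℂ) ^ 2 * Complex.I_sq
  rw [evalM_oscillator hgs (hfactor ▸ mul_ne_zero hsub hadd), hfactor]
  match_scalars <;> field_simp

lemma isNI_oscillator (hg : IsStableNIGain g a) (hν : 0 < ν)
    (hAB : (A.map Complex.ofReal + jw ν • B.map Complex.ofReal).PosSemidef) :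
    IsNI (oscillator g A B ν) := by
  have hgjw (ω : ℝ) : g ∈ regularAt (jw ω) := hg.mem_regularAt _ (re_jw _).ge
  refine ⟨proper_of_tendsto (tendsto_evalM_oscillator hg A B ν), fun s hs => ?_,
    fun ω hω hpole => posSemidef_niKer_iff.mpr fun u => ?_, fun ω hω hpole => ?_, fun hpole => ?_⟩
  · exact not_hasPole_oscillator (hg.mem_regularAt s hs.le) (sq_add_sq_ne_zero_of_re_pos hν hs)
  · obtain rfl | hne := eq_or_ne ω ν
    · have hlim := tendsto_dotProduct_mulVec (tendsto_const_nhds (x := star u))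
        (((continuousAt_evalM hpole).tendsto.mono_left nhdsWithin_le_nhds).comp
          (tendsto_jw_nhdsNE ω)) (tendsto_const_nhds (x := u))
      refine le_of_tendsto ((Complex.continuous_im.tendsto _).comp hlim) ?_
      filter_upwards [self_mem_nhdsWithin, nhdsWithin_le_nhds (lt_mem_nhds hω)] with ω' hne hω'
      exact im_star_dotProduct_evalM_oscillator_nonpos hg hν hAB.isHermitian hω' hne u
    · exact im_star_dotProduct_evalM_oscillator_nonpos hg hν hAB.isHermitian hω hne u
  · obtain rfl : ω = ν := by
      by_contra hne
      exact not_hasPole_oscillator (hgjw ω) (jw_sq_add_sq_ne_zero hω hν hne) hpole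
    exact ⟨_, hAB.smul (by positivity), tendsto_residue_oscillator (hgjw ω) hν A B⟩
  · refine absurd hpole (not_hasPole_oscillator (hg.mem_regularAt 0 le_rfl) ?_)
    simpa using hν.ne'

end TestPlants

section Interpolation

variable {d q k a b ω ν γ σ τ : ℝ} {s : ℂ} {g : RatFunc ℝ}
  {A B : Matrix (Fin n) (Fin n) ℝ} {M N : Matrix (Fin n) (Fin n) ℂ} {x y z : Fin n → ℂ}

lemma mul_inv_modePoly_mem_regularAt (hs : s ^ 2 + d * s + q ≠ 0) (k : ℝ) :
    RatFunc.C k * (modePoly d q)⁻¹ ∈ regularAt s :=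
  mul_mem (C_mem_regularAt k s) (inv_modePoly_mem_regularAt hs)

lemma evalC_resonator (hs : s ^ 2 + d * s + q ≠ 0) (a k : ℝ) :
    evalC (RatFunc.C a + RatFunc.C k * (modePoly d q)⁻¹) s = a + k * (s ^ 2 + d * s + q)⁻¹ := by
  rw [evalC_add (C_mem_regularAt a s) (mul_inv_modePoly_mem_regularAt hs k), evalC_C,
    evalC_mul (C_mem_regularAt k s) (inv_modePoly_mem_regularAt hs), evalC_C,
    evalC_inv_modePoly hs]

lemma isStableNIGain_resonator (hd : 0 < d) (hq : 0 < q) (hk : 0 ≤ k) (a : ℝ) :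
    IsStableNIGain (RatFunc.C a + RatFunc.C k * (modePoly d q)⁻¹) a where
  mem_regularAt s hs := add_mem (C_mem_regularAt a s)
    (mul_inv_modePoly_mem_regularAt (sq_add_mul_add_ne_zero hq hs (by linarith)) k)
  tendsto := by
    have hlim := ((tendsto_inv_modePoly d q).const_mul (k : ℂ)).const_add (a : ℂ)
    rw [mul_zero, add_zero] at hlim
    refine hlim.congr' ?_
    filter_upwards [Bornology.le_cofinite ℂ (eventually_sq_add_mul_add_ne_zero d q)] with s hs
    rw [evalC_resonator hs, evalC_inv_modePoly hs]
  im_nonpos ω hω := by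
    have hjw : 0 ≤ (jw ω).re := (re_jw ω).ge
    have him : 0 ≤ (jw ω ^ 2 + d * jw ω + q).im := by
      simpa [jw, sq] using (mul_pos hd hω).le
    rw [evalC_resonator (sq_add_mul_add_ne_zero hq hjw (by linarith)), Complex.add_im,
      Complex.ofReal_im, zero_add, Complex.im_ofReal_mul, Complex.inv_im]
    exact mul_nonpos_of_nonneg_of_nonpos hk
      (div_nonpos_of_nonpos_of_nonneg (neg_nonpos.mpr him) (Complex.normSq_nonneg _))

-- A resonance tuned to `ω` has arbitrary phase lag there at an arbitrarily small static gain.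
lemma exists_isStableNIGain (hω : 0 < ω) (hτ : 0 ≤ τ) (hab : a < b) :
    ∃ g, IsStableNIGain g a ∧ evalC g (jw ω) = a - τ * Complex.I ∧
      ∃ c : ℝ, c < b ∧ evalC g 0 = c := by
  obtain rfl | hτ := hτ.eq_or_lt
  · exact ⟨RatFunc.C a, isStableNIGain_C a, by simp [evalC_C], a, hab, evalC_C a 0⟩
  set k := (b - a) / 2 * ω ^ 2 with hk
  have hk0 : 0 < k := by have := sub_pos.mpr hab; positivity
  have hd : 0 < k / (ω * τ) := by positivity
  have hq : 0 < ω ^ 2 := by positivity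
  have hωC : (ω : ℂ) ≠ 0 := Complex.ofReal_ne_zero.mpr hω.ne'
  have hτC : (τ : ℂ) ≠ 0 := Complex.ofReal_ne_zero.mpr hτ.ne'
  have hkC : (k : ℂ) ≠ 0 := Complex.ofReal_ne_zero.mpr hk0.ne'
  have hne {s : ℂ} (hs : 0 ≤ s.re) : s ^ 2 + (k / (ω * τ) : ℝ) * s + (ω ^ 2 : ℝ) ≠ 0 :=
    sq_add_mul_add_ne_zero hq hs (by linarith)
  refine ⟨_, isStableNIGain_resonator hd hq hk0.le a, ?_, a + (b - a) / 2, by linarith, ?_⟩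
  · have hden : jw ω ^ 2 + (k / (ω * τ) : ℝ) * jw ω + (ω ^ 2 : ℝ) = Complex.I * k / τ := by
      simp only [jw, mul_pow, Complex.I_sq]
      push_cast
      field_simp
      ring
    rw [evalC_resonator (hne (re_jw _).ge), hden, inv_div, sub_eq_add_neg]
    field_simp
    linear_combination (τ : ℂ) * Complex.I_sq
  · rw [evalC_resonator (hne le_rfl), hk]
    push_cast
    field_simp
    ring

/-- The uncertainty class of the converse theorem: negative imaginary plants without poles at the
origin, with `P(∞) ≥ 0` and `P(0) < γ I`. -/
structure Admissible (γ : ℝ) (P : Matrix (Fin n) (Fin n) (RatFunc ℝ)) : Prop where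
  isNI : IsNI P
  not_hasPole_zero : ¬ HasPole P 0
  posSemidef_evalInf : (evalInf P).PosSemidef
  loewnerLT : LoewnerLT (evalR P 0) (γ • 1)

lemma admissible_oscillator (hg : IsStableNIGain g a) (ha : 0 ≤ a) (hν : 0 < ν)
    (hAB : (A.map Complex.ofReal + jw ν • B.map Complex.ofReal).PosSemidef)
    (hγ : ((γ : ℂ) • 1 - (evalC g 0 • 1 + (ν ^ 2 : ℂ)⁻¹ • A.map Complex.ofReal)).PosDef) :
    Admissible γ (oscillator g A B ν) where
  isNI := isNI_oscillator hg hν hAB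
  not_hasPole_zero := not_hasPole_oscillator (hg.mem_regularAt 0 le_rfl) (by simpa using hν.ne')
  posSemidef_evalInf := by
    rw [evalInf_eq_of_tendsto (tendsto_evalM_oscillator hg A B ν)]
    exact PosSemidef.one.smul ha
  loewnerLT := by
    rw [loewnerLT_smul_one_iff,
      evalM_oscillator (hg.mem_regularAt 0 le_rfl) (by simpa using hν.ne')]
    simpa using hγ

lemma eventually_posDef_of_tendsto {ι : Type*} {l : Filter ι} {F : ι → Matrix (Fin n) (Fin n) ℂ}
    (hF : Tendsto F l (𝓝 M)) (hherm : ∀ i, (F i).IsHermitian) (hM : M.PosDef) :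
    ∀ᶠ i in l, (F i).PosDef := by
  let Φ (M : Matrix (Fin n) (Fin n) ℂ) (u : Fin n → ℂ) (_ : ℝ) : ℝ := (star u ⬝ᵥ M *ᵥ u).re
  obtain ⟨K, hK⟩ := exists_eventually_norm_le_of_homogeneous (Φ := Φ) (t₀ := M) (by fun_prop)
    (fun M u _ c => by
      simp only [Φ, mulVec_smul, star_smul, smul_dotProduct, dotProduct_smul, star_trivial,
        Complex.smul_re, smul_eq_mul]
      ring)
    (fun u hu => (posDef_iff_re_pos hM.isHermitian).mp hM u hu)
  refine (hF.eventually hK).mono fun i hi => (posDef_iff_re_pos (hherm i)).mpr fun u hu => ?_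
  by_contra! hle
  exact hu (by simpa using hi u 0 hle)

lemma exists_posDef_mulVec_eq (hyx : 0 < star y ⬝ᵥ x) :
    ∃ N : Matrix (Fin n) (Fin n) ℂ, N.PosDef ∧ N *ᵥ y = x := by
  set b := star y ⬝ᵥ x with hb
  have hxy : star x ⬝ᵥ y = b := by
    rw [star_dotProduct, ← hb, Complex.star_def, Complex.conj_eq_iff_im]
    exact (Complex.lt_def.mp hyx).2.symm
  have hy : star y ⬝ᵥ y ≠ 0 := by
    rw [Ne, dotProduct_star_self_eq_zero]
    rintro rfl
    simp [b] at hyx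
  set Q : Matrix (Fin n) (Fin n) ℂ := 1 - (star y ⬝ᵥ y)⁻¹ • vecMulVec y (star y) with hQ
  have hQu (u : Fin n → ℂ) : Q *ᵥ u = u - ((star y ⬝ᵥ y)⁻¹ * (star y ⬝ᵥ u)) • y := by
    rw [hQ, sub_mulVec, one_mulVec, smul_mulVec, vecMulVec_mulVec, op_smul_eq_smul, smul_smul]
  set N := b⁻¹ • vecMulVec x (star x) + Qᴴ * Q with hN
  have hNu (u : Fin n → ℂ) : N *ᵥ u = (b⁻¹ * (star x ⬝ᵥ u)) • x + Qᴴ *ᵥ Q *ᵥ u := by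
    rw [hN, add_mulVec, mulVec_mulVec, smul_mulVec, vecMulVec_mulVec, op_smul_eq_smul, smul_smul]
  have hNy : N *ᵥ y = x := by
    rw [hNu, hxy, hQu, inv_mul_cancel₀ hy, inv_mul_cancel₀ hyx.ne', one_smul, one_smul, sub_self,
      mulVec_zero, add_zero]
  have hpos : N.PosSemidef := ((posSemidef_vecMulVec_self_star x).smul (inv_pos.mpr hyx).le).add
    (posSemidef_conjTranspose_mul_self Q)
  refine ⟨N, .of_dotProduct_mulVec_pos hpos.isHermitian fun u hu =>
    (hpos.dotProduct_mulVec_nonneg u).lt_of_ne' fun hzero => hu ?_, hNy⟩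
  have hker : N *ᵥ u = 0 := (hpos.dotProduct_mulVec_zero_iff u).mp hzero
  have hxu : star x ⬝ᵥ u = 0 := by
    rw [← hNy, star_mulVec, hpos.isHermitian.eq, ← dotProduct_mulVec, hker, dotProduct_zero]
  rw [hNu, hxu, mul_zero, zero_smul, zero_add, mulVec_mulVec,
    conjTranspose_mul_self_mulVec_eq_zero, hQu, sub_eq_zero] at hker
  rw [hker, dotProduct_smul, hxy, smul_eq_mul, mul_eq_zero, or_iff_left hyx.ne'] at hxu
  rw [hker, hxu, zero_smul]

lemma map_re_add_jw_smul_map_im (hω : ω ≠ 0) (N : Matrix (Fin n) (Fin n) ℂ) :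
    (N.map Complex.re).map Complex.ofReal +
      jw ω • (ω⁻¹ • N.map Complex.im).map Complex.ofReal = N := by
  ext i j
  apply Complex.ext <;> simp [jw, mul_inv_cancel_left₀ hω]

lemma map_smul_add_jw_smul_map_smul (A B : Matrix (Fin n) (Fin n) ℝ) (η ν : ℝ) :
    (η • A).map Complex.ofReal + jw ν • (η • B).map Complex.ofReal =
      (η : ℂ) • (A.map Complex.ofReal + jw ν • B.map Complex.ofReal) := by
  ext i j
  simp [mul_add, mul_left_comm]

lemma exists_nhds_sub_mul_pos (hω : 0 < ω) (hσ : σ ≠ 0) :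
    ∃ l : Filter ℝ, l.NeBot ∧ l ≤ 𝓝 ω ∧ ∀ᶠ ν in l, 0 < (ν ^ 2 - ω ^ 2) * σ := by
  rcases hσ.lt_or_gt with hneg | hpos
  · refine ⟨𝓝[<] ω, inferInstance, nhdsWithin_le_nhds, ?_⟩
    filter_upwards [self_mem_nhdsWithin, nhdsWithin_le_nhds (lt_mem_nhds hω)] with ν hν hν0
    exact mul_pos_of_neg_of_neg (sub_neg.mpr (pow_lt_pow_left₀ hν hν0.le two_ne_zero)) hneg
  · refine ⟨𝓝[>] ω, inferInstance, nhdsWithin_le_nhds, ?_⟩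
    filter_upwards [self_mem_nhdsWithin] with ν hν
    exact mul_pos (sub_pos.mpr (pow_lt_pow_left₀ hν hω.le two_ne_zero)) hpos

lemma eventually_posDef_mode (hω : ω ≠ 0) (hN : N.PosDef) :
    ∀ᶠ ν in 𝓝 ω, ((N.map Complex.re).map Complex.ofReal +
      jw ν • (ω⁻¹ • N.map Complex.im).map Complex.ofReal).PosDef := by
  have hval := map_re_add_jw_smul_map_im hω N
  refine eventually_posDef_of_tendsto ?_
    (isHermitian_map_add_jw_smul_map hω (hval.symm ▸ hN.isHermitian)) (hval.symm ▸ hN)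
  refine Continuous.tendsto ?_ ω
  simp only [jw]
  fun_prop

lemma eventually_posDef_smul_one_sub (hA : A.IsHermitian) (hb : b < γ) (hω : ω ≠ 0) (σ : ℝ) :
    ∀ᶠ ν in 𝓝 ω, ((γ : ℂ) • 1 - ((b : ℂ) • 1 + (ν ^ 2 : ℂ)⁻¹ •
      (((ν ^ 2 - ω ^ 2) * σ) • A).map Complex.ofReal)).PosDef := by
  have hlim : ContinuousAt (fun ν : ℝ => (γ : ℂ) • (1 : Matrix (Fin n) (Fin n) ℂ) -
      ((b : ℂ) • 1 + (ν ^ 2 : ℂ)⁻¹ • (((ν ^ 2 - ω ^ 2) * σ) • A).map Complex.ofReal)) ω := by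
    have : (ω : ℂ) ^ 2 ≠ 0 := by simpa using hω
    fun_prop (disch := assumption)
  refine eventually_posDef_of_tendsto hlim.tendsto (fun ν => ?_) ?_
  · have hstatic := isHermitian_map_ofReal.mpr (hA.smul (.all ((ν ^ 2 - ω ^ 2) * σ)))
    refine (isHermitian_one.smul (Complex.conj_ofReal γ)).sub
      ((isHermitian_one.smul (Complex.conj_ofReal b)).add (hstatic.smul ?_))
    simp [isSelfAdjoint_iff]
  · rw [sub_self, zero_mul, zero_smul, Matrix.map_zero _ Complex.ofReal_zero, smul_zero, add_zero,
      ← sub_smul, ← Complex.ofReal_sub]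
    exact PosDef.one.smul (by exact_mod_cast sub_pos.mpr hb)

-- A lightly excited mode at `ν` close to `ω` realizes any definite gain at `ω`, positive below and
-- negative above resonance, at vanishing static gain.
lemma exists_admissible_evalM_eq (hg : IsStableNIGain g a) (ha : 0 ≤ a) (hg0 : evalC g 0 = b)
    (hb : b < γ) (hω : 0 < ω) (hσ : σ ≠ 0) (hN : N.PosDef) :
    ∃ P : Matrix (Fin n) (Fin n) (RatFunc ℝ), Admissible γ P ∧ ¬ HasPole P (jw ω) ∧
      evalM P (jw ω) = evalC g (jw ω) • 1 + (σ : ℂ) • N := by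
  have hre : (N.map Complex.re).IsHermitian :=
    IsHermitian.ext fun i j => by simpa using congrArg Complex.re (hN.isHermitian.apply i j)
  obtain ⟨l, _, hl, hside⟩ := exists_nhds_sub_mul_pos hω hσ
  have hnear := (eventually_posDef_mode hω.ne' hN).and
    ((eventually_posDef_smul_one_sub hre hb hω.ne' σ).and (lt_mem_nhds hω))
  obtain ⟨ν, hη, hmode, hstatic, hν⟩ := (hside.and (hnear.filter_mono hl)).exists
  set η := (ν ^ 2 - ω ^ 2) * σ with hηdef
  have hne : ν ^ 2 - ω ^ 2 ≠ 0 := left_ne_zero_of_mul hη.ne'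
  have hjw : g ∈ regularAt (jw ω) := hg.mem_regularAt _ (re_jw _).ge
  have hden : jw ω ^ 2 + ν ^ 2 ≠ 0 := by rwa [jw_sq_add_sq, Complex.ofReal_ne_zero]
  refine ⟨oscillator g (η • N.map Complex.re) (η • ω⁻¹ • N.map Complex.im) ν,
    admissible_oscillator hg ha hν ?_ (hg0 ▸ hstatic), not_hasPole_oscillator hjw hden, ?_⟩
  · rw [map_smul_add_jw_smul_map_smul]
    exact hmode.posSemidef.smul (by exact_mod_cast hη.le)
  · rw [evalM_oscillator hjw hden, map_smul_add_jw_smul_map_smul,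
      map_re_add_jw_smul_map_im hω.ne', smul_smul, jw_sq_add_sq, ← Complex.ofReal_inv,
      ← Complex.ofReal_mul, hηdef, inv_mul_cancel_left₀ hne]

lemma exists_admissible_mulVec_eq (hγ : 0 < γ) (hω : 0 < ω) (hy : y ≠ 0)
    (hyz : (star y ⬝ᵥ z).im ≤ 0) :
    ∃ P : Matrix (Fin n) (Fin n) (RatFunc ℝ), Admissible γ P ∧ ¬ HasPole P (jw ω) ∧
      evalM P (jw ω) *ᵥ y = z := by
  obtain ⟨m, hm, hmy⟩ : ∃ m : ℝ, 0 < m ∧ star y ⬝ᵥ y = m := by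
    have hpos : 0 < star y ⬝ᵥ y := dotProduct_star_self_pos_iff.mpr hy
    exact ⟨_, (Complex.lt_def.mp hpos).1, Complex.ext rfl (Complex.lt_def.mp hpos).2.symm⟩
  obtain ⟨a, ha, haγ, hr⟩ : ∃ a : ℝ, 0 ≤ a ∧ a < γ ∧ (star y ⬝ᵥ z).re - a * m ≠ 0 := by
    by_cases hre : (star y ⬝ᵥ z).re = 0
    · exact ⟨γ / 2, by positivity, by linarith, by simp [hre, hγ.ne', hm.ne']⟩
    · exact ⟨0, le_rfl, hγ, by simpa using hre⟩
  set r := (star y ⬝ᵥ z).re - a * m with hrdef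
  obtain ⟨g, hg, hgω, b, hb, hg0⟩ :=
    exists_isStableNIGain hω (div_nonneg (neg_nonneg.mpr hyz) hm.le) haγ
  set x := z - evalC g (jw ω) • y with hx
  have hyx : star y ⬝ᵥ x = r := by
    rw [hx, dotProduct_sub, dotProduct_smul, hmy, hgω]
    apply Complex.ext
    · simp [hrdef]
    · simp only [smul_eq_mul, Complex.sub_im, Complex.sub_re, Complex.mul_im, Complex.mul_re,
        Complex.ofReal_re, Complex.ofReal_im, Complex.I_re, Complex.I_im]
      field_simp
      ring
  obtain ⟨N, hN, hNy⟩ := exists_posDef_mulVec_eq (x := (r : ℂ) • x) (y := y) (by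
    rw [dotProduct_smul, hyx, smul_eq_mul]
    exact_mod_cast mul_self_pos.mpr hr)
  obtain ⟨P, hP, hPω, heval⟩ := exists_admissible_evalM_eq hg ha hg0 hb hω (inv_ne_zero hr) hN
  refine ⟨P, hP, hPω, ?_⟩
  rw [heval, add_mulVec, smul_mulVec, smul_mulVec, one_mulVec, hNy, smul_smul, ← Complex.ofReal_mul,
    inv_mul_cancel₀ hr, Complex.ofReal_one, one_smul, hx, add_sub_cancel]

end Interpolation

section Necessity

variable {P C : Matrix (Fin n) (Fin n) (RatFunc ℝ)} {s : ℂ} {z : Fin n → ℂ} {γ ω : ℝ}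

lemma FeedbackStable.inv_mul_cancel (h : FeedbackStable P C) :
    (1 - P * C)⁻¹ * (1 - P * C) = 1 :=
  nonsing_inv_mul _ h.1.isUnit

lemma FeedbackStable.not_hasPole_inv (h : FeedbackStable P C) (hs : 0 ≤ s.re) :
    ¬ HasPole (1 - P * C)⁻¹ s :=
  not_hasPole_iff.mpr fun i j => h.2.2 s hs (.inl i) (.inl j)

lemma FeedbackStable.not_hasPole_inv_mul (h : FeedbackStable P C) (hs : 0 ≤ s.re) :
    ¬ HasPole ((1 - P * C)⁻¹ * P) s :=
  not_hasPole_iff.mpr fun i j => h.2.2 s hs (.inl i) (.inr j)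

lemma FeedbackStable.eq_zero_of_eq_mulVec_mulVec (h : FeedbackStable P C) (hs : 0 ≤ s.re)
    (hP : ¬ HasPole P s) (hC : ¬ HasPole C s) (hz : z = evalM P s *ᵥ evalM C s *ᵥ z) : z = 0 := by
  have hloop := not_hasPole_mul hP hC
  have heval := congrArg (evalM · s) h.inv_mul_cancel
  rw [evalM_mul (h.not_hasPole_inv hs) (not_hasPole_one_sub hloop), evalM_one_sub hloop,
    evalM_mul hP hC, evalM_one] at heval
  rw [← one_mulVec z, ← heval, ← mulVec_mulVec, sub_mulVec, one_mulVec, ← mulVec_mulVec, ← hz,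
    sub_self, mulVec_zero]

lemma FeedbackStable.eq_zero_of_mulVec_eq_zero (h : FeedbackStable P C) (hs : 0 ≤ s.re)
    {f : RatFunc ℝ} (hf : f ∈ regularAt s) (hfs : evalC f s = 0) (hfP : ¬ HasPole (f • P) s)
    (hunit : IsUnit (evalM (f • P) s)) (hC : ¬ HasPole C s) (hz : evalM C s *ᵥ z = 0) :
    z = 0 := by
  have hW := h.not_hasPole_inv hs
  have hV := h.not_hasPole_inv_mul hs
  have hWs : evalM (1 - P * C)⁻¹ s = 0 := by
    have heval := congrArg (evalM · s) (Matrix.mul_smul (1 - P * C)⁻¹ f P)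
    rw [evalM_mul hW hfP, evalM_smul hf hV, hfs, zero_smul] at heval
    exact hunit.mul_left_eq_zero.mp heval
  have hsplit : (1 - P * C)⁻¹ = 1 + (1 - P * C)⁻¹ * P * C := by
    rw [← sub_eq_iff_eq_add, mul_assoc, ← mul_one_sub, h.inv_mul_cancel]
  have heval := congrArg (evalM · s) hsplit
  rw [evalM_add (not_hasPole_one s) (not_hasPole_mul hV hC), evalM_mul hV hC, evalM_one, hWs]
    at heval
  simpa [add_mulVec, ← mulVec_mulVec, hz] using (congrArg (· *ᵥ z) heval).symm

-- A plant with an invertible residue at `jω` forces `(I - P C)⁻¹` to vanish there, so that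
-- `(I - P C)⁻¹ = I + (I - P C)⁻¹ P C` rules out transmission zeros of `C` at `jω`.
lemma eq_zero_of_evalM_mulVec_eq_zero (hC : MemRHinf C) (hγ : 0 < γ)
    (hstable : ∀ P, Admissible γ P → FeedbackStable P C) (hω : 0 < ω)
    (hz : evalM C (jw ω) *ᵥ z = 0) : z = 0 := by
  have hjw : 0 ≤ (jw ω).re := (re_jw ω).ge
  obtain ⟨c, hc, hcω⟩ : ∃ c : ℝ, 0 < c ∧ (ω ^ 2)⁻¹ * c = γ / 2 :=
    ⟨ω ^ 2 * (γ / 2), by positivity, inv_mul_cancel_left₀ (by positivity) _⟩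
  set A : Matrix (Fin n) (Fin n) ℝ := c • 1
  have hAmap : A.map Complex.ofReal = (c : ℂ) • 1 := map_ofReal_smul_one c
  have hadm : Admissible γ (oscillator (RatFunc.C 0) A 0 ω) := by
    refine admissible_oscillator (isStableNIGain_C 0) le_rfl hω ?_ ?_
    · rw [Matrix.map_zero _ Complex.ofReal_zero, smul_zero, add_zero, hAmap]
      exact PosSemidef.one.smul (by exact_mod_cast hc.le)
    · rw [evalC_C, Complex.ofReal_zero, zero_smul, zero_add, hAmap, smul_smul,
        ← Complex.ofReal_pow, ← Complex.ofReal_inv, ← Complex.ofReal_mul, hcω, ← sub_smul,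
        ← Complex.ofReal_sub, sub_half]
      exact PosDef.one.smul (by exact_mod_cast half_pos hγ)
  have hfP : modePoly 0 (ω ^ 2) • oscillator (RatFunc.C 0) A 0 ω = A.map RatFunc.C := by
    simp [oscillator, modePoly_ne_zero]
  refine (hstable _ hadm).eq_zero_of_mulVec_eq_zero hjw (modePoly_mem_regularAt _ _ _) ?_
    (hfP ▸ not_hasPole_map_C A _) ?_ (hC.not_hasPole hjw) hz
  · simpa [evalC_modePoly] using jw_sq_add_sq ω ω
  · rw [hfP, evalM_map_C, hAmap]
    exact isUnit_one.smul (Units.mk0 (c : ℂ) (Complex.ofReal_ne_zero.mpr hc.ne'))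

theorem isSNI_of_forall_feedbackStable (hC : MemRHinf C) (hγ : 0 < γ)
    (hstable : ∀ P, Admissible γ P → FeedbackStable P C) : IsSNI C := by
  refine ⟨hC, fun ω hω => posDef_niKer_iff.mpr fun z hz => ?_⟩
  have hjw : 0 ≤ (jw ω).re := (re_jw ω).ge
  by_contra! him
  have hy : evalM C (jw ω) *ᵥ z ≠ 0 :=
    fun h => hz (eq_zero_of_evalM_mulVec_eq_zero hC hγ hstable hω h)
  obtain ⟨P, hP, hPω, heval⟩ := exists_admissible_mulVec_eq (z := z) hγ hω hy (by
    rw [star_dotProduct, Complex.star_def, Complex.conj_im]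
    exact neg_nonpos.mpr him)
  exact hz ((hstable P hP).eq_zero_of_eq_mulVec_mulVec hjw hPω (hC.not_hasPole hjw) heval.symm)

lemma exists_mulVec_eq_smul_of_not_posSemidef {M : Matrix (Fin n) (Fin n) ℂ}
    (hM : M.IsHermitian) (hneg : ¬ M.PosSemidef) :
    ∃ t : ℝ, t < 0 ∧ ∃ v, v ≠ 0 ∧ M *ᵥ v = (t : ℂ) • v := by
  rw [hM.posSemidef_iff_eigenvalues_nonneg, Pi.le_def, not_forall] at hneg
  obtain ⟨i, hi⟩ := hneg
  exact ⟨_, not_le.mp hi, ⇑(hM.eigenvectorBasis i),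
    by simpa using hM.eigenvectorBasis.toBasis.ne_zero i,
    by simpa using hM.mulVec_eigenvectorBasis i⟩

theorem loewnerLE_of_forall_feedbackStable (hC : IsSNI C) (hγ : 0 < γ)
    (hstable : ∀ P, Admissible γ P → FeedbackStable P C) :
    LoewnerLE (evalR C 0) (γ⁻¹ • 1) := by
  have hC0 : ¬ HasPole C 0 := hC.1.not_hasPole le_rfl
  have hherm : (((γ⁻¹ : ℝ) : ℂ) • 1 - evalM C 0).IsHermitian :=
    (isHermitian_one.smul (Complex.conj_ofReal _)).sub (hC.isNI.isHermitian_evalM_zero hC0)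
  rw [loewnerLE_smul_one_iff]
  by_contra hneg
  obtain ⟨t, ht, v, hv, htv⟩ := exists_mulVec_eq_smul_of_not_posSemidef hherm hneg
  set μ := γ⁻¹ - t with hμ
  have hγμ : γ⁻¹ < μ := by linarith
  have hμ0 : 0 < μ := (inv_pos.mpr hγ).trans hγμ
  have hμv : evalM C 0 *ᵥ v = (μ : ℂ) • v := by
    rw [sub_mulVec, smul_mulVec, one_mulVec] at htv
    rw [hμ, Complex.ofReal_sub, sub_smul, ← htv, sub_sub_cancel]
  have hadm : Admissible γ (oscillator (n := n) (RatFunc.C μ⁻¹) 0 0 1) := by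
    refine admissible_oscillator (isStableNIGain_C _) (inv_pos.mpr hμ0).le one_pos ?_ ?_
    · simpa using PosSemidef.zero
    · rw [Matrix.map_zero _ Complex.ofReal_zero, smul_zero, add_zero, evalC_C, ← sub_smul,
        ← Complex.ofReal_sub]
      exact PosDef.one.smul (by exact_mod_cast sub_pos.mpr (inv_lt_of_inv_lt₀ hγ hγμ))
  refine hv ((hstable _ hadm).eq_zero_of_eq_mulVec_mulVec le_rfl hadm.not_hasPole_zero hC0 ?_)
  rw [evalM_oscillator (C_mem_regularAt _ 0) (by simp), hμv, evalC_C,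
    Matrix.map_zero _ Complex.ofReal_zero, smul_zero, add_zero, smul_zero, add_zero, smul_mulVec,
    one_mulVec, smul_smul, ← Complex.ofReal_mul, inv_mul_cancel₀ hμ0.ne', Complex.ofReal_one,
    one_smul]

end Necessity

/-- converse theorem for NI uncertainty without origin poles,
nonnegative instantaneous gain and strictly bounded static gain. -/
theorem converse_N0_instantaneous_nonneg {n : ℕ} (C : Matrix (Fin n) (Fin n) (RatFunc ℝ)) (hC : MemRHinf C)
    (γ : ℝ) (hγ : 0 < γ) :
    (∀ P : Matrix (Fin n) (Fin n) (RatFunc ℝ), IsNI P → ¬ HasPole P 0 →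
        (evalInf P).PosSemidef → LoewnerLT (evalR P 0) (γ • 1) → FeedbackStable P C) ↔
      (IsSNI C ∧ LoewnerLE (evalR C 0) (γ⁻¹ • 1)) := by
  constructor
  · intro h
    have hstable (P) (hP : Admissible γ P) : FeedbackStable P C :=
      h P hP.isNI hP.not_hasPole_zero hP.posSemidef_evalInf hP.loewnerLT
    have hSNI := isSNI_of_forall_feedbackStable hC hγ hstable
    exact ⟨hSNI, loewnerLE_of_forall_feedbackStable hSNI hγ hstable⟩
  · rintro ⟨hSNI, hCγ⟩ P hP hP0 hPinf hPγ
    exact hSNI.feedbackStable hγ hCγ hP hP0 hPinf hPγ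

end NIControl
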